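/- Let (R, m, k) be a Noetherian local ring, S := R[X_1,…,X_n] a graded polynomial ring over R with deg X_i > 0 (and R in degree 0), and M a finitely generated graded S-module; set M̄ := M ⊗_R k. For integers μ and ℓ: if cd_{S_+}( Tor_1^R(M, k) ) ≤ ℓ + 1, then ( H^i_{S_+}(M)_μ = 0 for all i ≥ ℓ ) implies ( H^i_{S_+}(M̄)_μ = 0 for all i ≥ ℓ ); and the two conditions are equivalent if cd_{S_+}( Tor_1^R(M, k) ) ≤ ℓ. In particular, reg(M̄) ≤ reg(M) if cd_{S_+}( Tor_1^R(M, k) ) ≤ 1, and reg(M̄) = reg(M) if in addition depth_{S_+}(M) > 0. -/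

import Mathlib

noncomputable section CechCore

variable (A : Type) [CommRing A] {n : ℕ} (x : Fin n → A)
  (M : Type) [AddCommGroup M] [Module A M]

/-- The localization of `M` at the powers of `∏ i ∈ S, x i`. -/
abbrev cechL (S : Finset (Fin n)) : Type :=
  LocalizedModule (Submonoid.powers (∏ i ∈ S, x i)) M

/-- The `p`-th term of the (stable Koszul/Čech) complex of `M` with respect to `x`. -/
abbrev cechC (p : ℕ) : Type := ∀ S : {S : Finset (Fin n) // S.card = p}, cechL A x M S.1

/-- The localization map between Čech localizations, for `S ⊆ T`. -/
def cechMap (S T : Finset (Fin n)) (h : S ⊆ T) : cechL A x M S →ₗ[A] cechL A x M T :=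
  LocalizedModule.lift _ (LocalizedModule.mkLinearMap (Submonoid.powers (∏ i ∈ T, x i)) M)
    (by
      rintro ⟨s, k, rfl⟩
      simp only [map_pow]
      refine IsUnit.pow k ?_
      have hu : IsUnit ((algebraMap A (Module.End A (cechL A x M T))) (∏ i ∈ T, x i)) :=
        IsLocalizedModule.map_units (LocalizedModule.mkLinearMap _ M)
          ⟨∏ i ∈ T, x i, Submonoid.mem_powers _⟩
      have h2 : (∏ i ∈ T, x i) = (∏ i ∈ T \ S, x i) * ∏ i ∈ S, x i :=
        (Finset.prod_sdiff h).symm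
      have hu' : IsUnit ((algebraMap A (Module.End A (cechL A x M T)))
          ((∏ i ∈ T \ S, x i) * ∏ i ∈ S, x i)) := by rw [← h2]; exact hu
      rw [map_mul] at hu'
      exact (((Commute.all ((∏ i ∈ T \ S, x i)) (∏ i ∈ S, x i)).map
        (algebraMap A (Module.End A (cechL A x M T))).toMonoidHom).isUnit_mul_iff.mp hu').2)

/-- The Čech differential. -/
def cechD (p : ℕ) : cechC A x M p →ₗ[A] cechC A x M (p + 1) :=
  LinearMap.pi fun T =>
    ∑ j ∈ T.1.attach,
      ((-1 : A) ^ (T.1.filter (fun a => a < j.1)).card) •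
        ((cechMap A x M (T.1.erase j.1) T.1 (Finset.erase_subset _ _)).comp
          (LinearMap.proj (⟨T.1.erase j.1, by
            simp [Finset.card_erase_of_mem j.2, T.2]⟩ : {S : Finset (Fin n) // S.card = p})))

/-- `c` is a coboundary in the Čech complex. -/
def cechIsBoundary : (p : ℕ) → cechC A x M p → Prop
  | 0, c => c = 0
  | (q + 1), c => ∃ b : cechC A x M q, cechD A x M q b = c

/-- The degree-`μ` graded piece of a Čech localization, for a grading `ℳ` of `M`
over a grading of `A` in which `x i` has degree `w i`. -/
def cechGrade (ℳ : ℤ → AddSubgroup M) (w : Fin n → ℤ) (μ : ℤ) (S : Finset (Fin n)) :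
    AddSubgroup (cechL A x M S) :=
  AddSubgroup.closure
    {c | ∃ (m : M) (k : ℕ), m ∈ ℳ (μ + k * (∑ i ∈ S, w i)) ∧
      c = LocalizedModule.mk m ⟨(∏ i ∈ S, x i) ^ k, Submonoid.pow_mem _ (Submonoid.mem_powers _) k⟩}

/-- `H^i_{(x)}(M)_μ ≠ 0`: there is a homogeneous degree-`μ` cocycle in the Čech complex
which is not a coboundary.  This is the nonvanishing of the degree-`μ` part of the `i`-th
local cohomology of the graded module `M` supported on the ideal generated by `x`. -/
def lcGradeNonzero (ℳ : ℤ → AddSubgroup M) (w : Fin n → ℤ) (i : ℕ) (μ : ℤ) : Prop :=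
  ∃ c : cechC A x M i, (∀ T, c T ∈ cechGrade A x M ℳ w μ T.1) ∧
    cechD A x M i c = 0 ∧ ¬ cechIsBoundary A x M i c

/-- `H^i_{(x)}(M) = 0` : every Čech cocycle is a coboundary. -/
def lcVanish (i : ℕ) : Prop :=
  ∀ c : cechC A x M i, cechD A x M i c = 0 → cechIsBoundary A x M i c

/-- The map from the previous term of the Čech complex (declared as the zero map in
homological degree `0`). -/
def cechDprev : (i : ℕ) → (cechC A x M (i - 1) →ₗ[A] cechC A x M i)
  | 0 => 0
  | (q + 1) => cechD A x M q

/-- The `i`-th local cohomology module of `M` supported on the ideal generated by `x`,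
defined as cocycles modulo (cocycles ∩ boundaries) of the Čech complex. -/
def lcMod (i : ℕ) : Type :=
  ↥(LinearMap.ker (cechD A x M i)) ⧸
    (Submodule.comap (LinearMap.ker (cechD A x M i)).subtype
      (LinearMap.range (cechDprev A x M i)))

instance (i : ℕ) : AddCommGroup (lcMod A x M i) := by unfold lcMod; infer_instance
instance (i : ℕ) : Module A (lcMod A x M i) := by unfold lcMod; infer_instance

/-- The ideal of elements of positive degree of a graded ring. -/
def irrelevantIdeal (𝒜 : ℤ → AddSubgroup A) : Ideal A :=
  Ideal.span {a : A | ∃ μ > 0, a ∈ 𝒜 μ}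

end CechCore

noncomputable section TmulCore

variable (R : Type) [CommRing R] (S : Type) [CommRing S] [Algebra R S]
variable (M : Type) [AddCommGroup M] [Module R M] [Module S M] [IsScalarTower R S M]
variable (N : Type) [AddCommGroup N] [Module R N]

/-- The `S`-linear map `m ↦ m ⊗ n`. -/
def tmulRightS (nn : N) : M →ₗ[S] TensorProduct R M N where
  toFun := fun m => m ⊗ₜ[R] nn
  map_add' := fun a b => TensorProduct.add_tmul a b nn
  map_smul' := fun s m => by simp [TensorProduct.smul_tmul']

/-- The canonical map `(M_f) ⊗_R N → (M ⊗_R N)_f` at the level of Čech localizations,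
sending `m/f^k ⊗ n` to `(m ⊗ n)/f^k`. -/
def cechTmul {n : ℕ} (x : Fin n → S) (T : Finset (Fin n))
    (c : cechL S x M T) (nn : N) : cechL S x (TensorProduct R M N) T :=
  LocalizedModule.lift _
    ((LocalizedModule.mkLinearMap (Submonoid.powers (∏ i ∈ T, x i))
        (TensorProduct R M N)).comp (tmulRightS R S M N nn))
    (fun s => IsLocalizedModule.map_units
      (LocalizedModule.mkLinearMap (Submonoid.powers (∏ i ∈ T, x i)) (TensorProduct R M N)) s) c

end TmulCore

noncomputable section TorCore

variable (R : Type) [CommRing R] (S : Type) [CommRing S] [Algebra R S]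
variable (M : Type) [AddCommGroup M] [Module R M] [Module S M] [IsScalarTower R S M]
variable (F : ℕ → Type) [∀ q, AddCommGroup (F q)] [∀ q, Module R (F q)]
variable (dF : ∀ q : ℕ, F (q + 1) →ₗ[R] F q)

/-- The differential `M ⊗ F_{q+1} → M ⊗ F_q` of the complex `M ⊗_R F_•`, as a map of
`S`-modules (through the `S`-module structure of `M`). -/
def torD (q : ℕ) : TensorProduct R M (F (q + 1)) →ₗ[S] TensorProduct R M (F q) :=
  TensorProduct.AlgebraTensorModule.map (LinearMap.id : M →ₗ[S] M) (dF q)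

/-- The outgoing differential `M ⊗ F_q → M ⊗ F_{q-1}` (the zero map for `q = 0`). -/
def torDout : (q : ℕ) → (TensorProduct R M (F q) →ₗ[S] TensorProduct R M (F (q - 1)))
  | 0 => 0
  | (q + 1) => torD R S M F dF q

/-- `Tor_q^R(M, N)` computed from a given free resolution `F_• → N` of `N`, as an
`S`-module: the homology `ker(M ⊗ F_q → M ⊗ F_{q-1}) / im(M ⊗ F_{q+1} → M ⊗ F_q)`. -/
def torMod (q : ℕ) : Type :=
  ↥(LinearMap.ker (torDout R S M F dF q)) ⧸
    (Submodule.comap (LinearMap.ker (torDout R S M F dF q)).subtype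
      (LinearMap.range (torD R S M F dF q)))

instance (q : ℕ) : AddCommGroup (torMod R S M F dF q) := by unfold torMod; infer_instance
instance (q : ℕ) : Module S (torMod R S M F dF q) := by unfold torMod; infer_instance

end TorCore

/-!
Let `F` be a free resolution of the residue field `k`, so that the complex `M ⊗ F` has `M ⊗ k` as
its cokernel and the modules `Tor_q(M, k)`, `q ≥ 1`, as its homology. Localized at a prime of `S`
outside the support of `Tor_1(M, k)`, either `M` is flat over `R`, by the local criterion of
flatness, or some element of `𝔪` is invertible; in both cases all the higher `Tor_q(M, k)` vanish
there. Cohomological dimension depends only on the support, so every `Tor_q(M, k)` with `q ≥ 1`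
inherits the bound on the cohomological dimension of `Tor_1(M, k)`.

If the degree `μ` part of `H^j(M)` vanishes for all `j ≥ i`, then so does that of `H^j(M ⊗ F_q)`,
and a cocycle of `M ⊗ k` lifts along `M ⊗ F`, the obstructions lying in groups `H^j(Tor_q)`, `j ≥
i + 2`. Conversely, let the degree `μ` part `H` of `H^i(M)` be given and suppose that those of
`H^i(M ⊗ k)` and of `H^j(M)`, `j > i`, vanish. The same chase shows that each class of `H^i(M ⊗
F_0)_μ` comes from `M ⊗ F_1`. The augmentation of `F_0` lifts to a linear form `F_0 → R` which
takes values in `𝔪` on the image of `F_1` and is a unit at some vector, so contracting with it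
gives `H = 𝔪 H`. By Nakayama's lemma `H = 0`, as `H` is finitely generated over `R`: by descending
induction on `i` this reduces to the shifts `S(-a)`, for which only `H^n` is nonzero, and `H^n`
has finitely many monomials in each degree. The regularities are compared by taking `ℓ = i`.
-/

noncomputable section CechFractions

variable {A : Type} [CommRing A] {n : ℕ} (x : Fin n → A)
variable {M : Type} [AddCommGroup M] [Module A M]

/-- The fraction `m / (∏ i ∈ T, x i) ^ k` in the localization `cechL A x M T`. -/
def cechFrac (T : Finset (Fin n)) (k : ℕ) (m : M) : cechL A x M T :=
  LocalizedModule.mk m ⟨(∏ i ∈ T, x i) ^ k, Submonoid.pow_mem _ (Submonoid.mem_powers _) k⟩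

variable (T : Finset (Fin n))

lemma exists_eq_cechFrac (c : cechL A x M T) : ∃ k m, c = cechFrac x T k m := by
  induction c using LocalizedModule.induction_on with
  | h m s =>
    obtain ⟨s, k, rfl⟩ := s
    exact ⟨k, m, rfl⟩

lemma cechFrac_eq_iff (k l : ℕ) (m m' : M) :
    cechFrac x T k m = cechFrac x T l m' ↔
      ∃ a : ℕ, (∏ i ∈ T, x i) ^ (a + l) • m = (∏ i ∈ T, x i) ^ (a + k) • m' := by
  unfold cechFrac
  rw [LocalizedModule.mk_eq]
  constructor
  · rintro ⟨⟨_, a, rfl⟩, h⟩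
    exact ⟨a, by simpa [Submonoid.smul_def, smul_smul, pow_add] using h⟩
  · rintro ⟨a, h⟩
    exact ⟨⟨_, a, rfl⟩, by simpa [Submonoid.smul_def, smul_smul, pow_add] using h⟩

lemma cechFrac_add (k : ℕ) (m m' : M) :
    cechFrac x T k (m + m') = cechFrac x T k m + cechFrac x T k m' := by
  unfold cechFrac
  rw [LocalizedModule.mk_add_mk, LocalizedModule.mk_eq]
  exact ⟨1, by simp [Submonoid.smul_def, smul_smul]⟩

@[simp] lemma cechFrac_zero (k : ℕ) : cechFrac x T k (0 : M) = 0 :=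
  LocalizedModule.zero_mk _

lemma cechFrac_smul {R : Type} [CommRing R] [Algebra R A] [Module R M] [IsScalarTower R A M]
    (k : ℕ) (r : R) (m : M) : cechFrac x T k (r • m) = r • cechFrac x T k m :=
  (LocalizedModule.smul'_mk r m _).symm

/-- The map `m ↦ m / (∏ i ∈ T, x i) ^ k`, as a linear map over a base ring `R`. -/
def cechFracHom (R : Type) [CommRing R] [Algebra R A] [Module R M] [IsScalarTower R A M] (k : ℕ) :
    M →ₗ[R] cechL A x M T where
  toFun := cechFrac x T k
  map_add' := cechFrac_add x T k
  map_smul' := cechFrac_smul x T k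

lemma cechFrac_eq_cechFrac_add (k l : ℕ) (m : M) :
    cechFrac x T k m = cechFrac x T (k + l) ((∏ i ∈ T, x i) ^ l • m) := by
  rw [cechFrac_eq_iff]
  exact ⟨0, by simp [smul_smul, pow_add]⟩

lemma exists_eq_cechFrac₂ (c d : cechL A x M T) :
    ∃ k m m', c = cechFrac x T k m ∧ d = cechFrac x T k m' := by
  obtain ⟨k, m, rfl⟩ := exists_eq_cechFrac x T c
  obtain ⟨l, m', rfl⟩ := exists_eq_cechFrac x T d
  refine ⟨k + l, _, (∏ i ∈ T, x i) ^ k • m', cechFrac_eq_cechFrac_add x T k l m, ?_⟩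
  rw [add_comm]
  exact cechFrac_eq_cechFrac_add x T l k m'

section Lift

variable {R : Type} [CommRing R] [Module R M] {Q : Type} [AddCommGroup Q] [Module R Q]
  (φ : ℕ → M →ₗ[R] Q)

variable {x T} in
lemma eq_of_cechFrac_eq_cechFrac
    (hφ : ∀ k l m, φ (k + l) ((∏ i ∈ T, x i) ^ l • m) = φ k m) {k l : ℕ} {m m' : M}
    (h : cechFrac x T k m = cechFrac x T l m') : φ k m = φ l m' := by
  obtain ⟨a, ha⟩ := (cechFrac_eq_iff x T k l m m').1 h
  rw [← hφ k (a + l) m, ha, ← hφ l (a + k) m']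
  congr 2
  omega

variable [Algebra R A] [IsScalarTower R A M]

/-- The `R`-linear map on `cechL A x M T` sending `m / (∏ i ∈ T, x i) ^ k` to `φ k m`; it need not
be `A`-linear. -/
def cechLift (hφ : ∀ k l m, φ (k + l) ((∏ i ∈ T, x i) ^ l • m) = φ k m) :
    cechL A x M T →ₗ[R] Q where
  toFun c := φ (exists_eq_cechFrac x T c).choose (exists_eq_cechFrac x T c).choose_spec.choose
  map_add' c d := by
    obtain ⟨k, m, m', hc, hd⟩ := exists_eq_cechFrac₂ x T c d
    have key (e : cechL A x M T) (v : M) (he : e = cechFrac x T k v) :=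
      eq_of_cechFrac_eq_cechFrac φ hφ
        ((exists_eq_cechFrac x T e).choose_spec.choose_spec.symm.trans he)
    rw [key c m hc, key d m' hd, key (c + d) (m + m') (by rw [hc, hd, cechFrac_add]), map_add]
  map_smul' r c := by
    have hc := (exists_eq_cechFrac x T c).choose_spec.choose_spec
    rw [RingHom.id_apply, ← map_smul]
    refine eq_of_cechFrac_eq_cechFrac φ hφ
      ((exists_eq_cechFrac x T (r • c)).choose_spec.choose_spec.symm.trans ?_)
    rw [cechFrac_smul, ← hc]

@[simp] lemma cechLift_cechFrac (hφ : ∀ k l m, φ (k + l) ((∏ i ∈ T, x i) ^ l • m) = φ k m)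
    (k : ℕ) (m : M) : cechLift x T φ hφ (cechFrac x T k m) = φ k m :=
  eq_of_cechFrac_eq_cechFrac φ hφ
    (exists_eq_cechFrac x T (cechFrac x T k m)).choose_spec.choose_spec.symm

end Lift

lemma cechMap_cechFrac (S : Finset (Fin n)) (h : S ⊆ T) (k : ℕ) (m : M) :
    cechMap A x M S T h (cechFrac x S k m) = cechFrac x T k ((∏ i ∈ T \ S, x i) ^ k • m) := by
  unfold cechMap cechFrac
  rw [LocalizedModule.lift_mk, Module.End.algebraMap_isUnit_inv_apply_eq_iff]
  simp only [LocalizedModule.mkLinearMap_apply]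
  rw [LocalizedModule.smul'_mk, LocalizedModule.mk_eq]
  refine ⟨1, ?_⟩
  simp only [one_smul, Submonoid.smul_def, smul_smul]
  rw [← Finset.prod_sdiff h, mul_pow, mul_comm]

variable {T} in
lemma cechMap_cechMap {S U : Finset (Fin n)} (h : S ⊆ T) (h' : T ⊆ U) (c : cechL A x M S) :
    cechMap A x M T U h' (cechMap A x M S T h c) = cechMap A x M S U (h.trans h') c := by
  obtain ⟨k, m, rfl⟩ := exists_eq_cechFrac x S c
  rw [cechMap_cechFrac, cechMap_cechFrac, cechMap_cechFrac, smul_smul, ← mul_pow,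
    ← Finset.prod_union (Finset.sdiff_disjoint.mono_right Finset.sdiff_subset),
    Finset.sdiff_union_sdiff_cancel h' h]

end CechFractions

noncomputable section CechComplex

variable {A : Type} [CommRing A] {n : ℕ} (x : Fin n → A)
variable {M : Type} [AddCommGroup M] [Module A M]

variable (A) in
/-- The sign `(-1) ^ #{a ∈ T | a < j}` of the Čech differential. -/
def cechSign (T : Finset (Fin n)) (j : Fin n) : A := (-1) ^ (T.filter (· < j)).card

lemma cechSign_mul_self (T : Finset (Fin n)) (j : Fin n) :
    cechSign A T j * cechSign A T j = 1 := by
  rw [cechSign, ← mul_pow]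
  simp

lemma map_cechSign_smul {N : Type} [AddCommGroup N] [Module A N] {F : Type} [FunLike F M N]
    [AddMonoidHomClass F M N] (f : F) (T : Finset (Fin n)) (j : Fin n) (m : M) :
    f (cechSign A T j • m) = cechSign A T j • f m := by
  rw [cechSign]
  rcases neg_one_pow_eq_or A (T.filter (· < j)).card with h | h <;> simp [h]

lemma cechSign_mul_cechSign_erase {T : Finset (Fin n)} {j l : Fin n} (hj : j ∈ T) (hl : l ∈ T)
    (hjl : j ≠ l) :
    cechSign A T j * cechSign A (T.erase j) l = -(cechSign A T l * cechSign A (T.erase l) j) := by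
  wlog hlt : j < l generalizing j l
  · rw [this hl hj hjl.symm (hjl.symm.lt_of_le (not_lt.1 hlt)), neg_neg]
  have h1 : (T.erase l).filter (· < j) = T.filter (· < j) := by
    ext a
    simp only [Finset.mem_filter, Finset.mem_erase]
    exact ⟨fun h => ⟨h.1.2, h.2⟩, fun h => ⟨⟨(h.2.trans hlt).ne, h.1⟩, h.2⟩⟩
  have h2 : (T.erase j).filter (· < l) = (T.filter (· < l)).erase j := by
    rw [Finset.filter_erase]
  have h3 : ((T.filter (· < l)).erase j).card + 1 = (T.filter (· < l)).card :=
    Finset.card_erase_add_one (by simp [hj, hlt])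
  rw [cechSign, cechSign, cechSign, cechSign, h1, h2, ← h3]
  ring

lemma cechSign_mul_cechSign_insert {T : Finset (Fin n)} {j l : Fin n} (hj : j ∉ T) (hl : l ∈ T) :
    cechSign A T l * cechSign A ((insert j T).erase l) j =
      -(cechSign A (insert j T) j * cechSign A (insert j T) l) := by
  have h := cechSign_mul_cechSign_erase (A := A) (Finset.mem_insert_of_mem hl)
    (Finset.mem_insert_self j T) (by rintro rfl; exact hj hl)
  rw [Finset.erase_insert hj] at h
  linear_combination (cechSign A (insert j T) l * cechSign A T l) * h
    - (cechSign A T l * cechSign A ((insert j T).erase l) j) *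
      cechSign_mul_self (A := A) (insert j T) l
    - (cechSign A (insert j T) j * cechSign A (insert j T) l) * cechSign_mul_self (A := A) T l

variable (A M) in
/-- The product of all the Čech localizations. Working with all index sets at once avoids
transporting along equalities between cardinalities. -/
abbrev cechTotal : Type := ∀ T : Finset (Fin n), cechL A x M T

/-- The Čech differential on `cechTotal`. -/
def cechTotalD (c : cechTotal A x M) : cechTotal A x M := fun T =>
  ∑ j ∈ T, cechSign A T j • cechMap A x M (T.erase j) T (Finset.erase_subset _ _) (c (T.erase j))

lemma cechTotalD_cechTotalD (c : cechTotal A x M) : cechTotalD x (cechTotalD x c) = 0 := by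
  ext T
  let G : Finset (Fin n) → cechL A x M T := fun S =>
    if h : S ⊆ T then cechMap A x M S T h (c S) else 0
  have key : ∀ j ∈ T, cechSign A T j • cechMap A x M (T.erase j) T (Finset.erase_subset _ _)
      (cechTotalD x c (T.erase j)) =
      ∑ l ∈ T.erase j, (cechSign A T j * cechSign A (T.erase j) l) • G ((T.erase j).erase l) := by
    intro j _
    rw [cechTotalD, map_sum, Finset.smul_sum]
    refine Finset.sum_congr rfl fun l _ => ?_
    have hs : (T.erase j).erase l ⊆ T := (Finset.erase_subset _ _).trans (Finset.erase_subset _ _)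
    simp only [G, dif_pos hs]
    rw [map_smul, smul_smul, cechMap_cechMap]
  rw [cechTotalD, Finset.sum_congr rfl key, Finset.sum_sigma']
  refine Finset.sum_involution (fun a _ => ⟨a.2, a.1⟩) ?_ ?_ ?_ fun _ _ => rfl
  · rintro ⟨j, l⟩ h
    simp only [Finset.mem_sigma, Finset.mem_erase] at h
    rw [Finset.erase_right_comm (a := l), ← add_smul,
      cechSign_mul_cechSign_erase h.1 h.2.2 (Ne.symm h.2.1), neg_add_cancel, zero_smul]
  · rintro ⟨j, l⟩ h _ h2
    simp only [Finset.mem_sigma, Finset.mem_erase] at h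
    simp only [Sigma.mk.injEq, heq_eq_eq] at h2
    exact h.2.1 h2.1
  · rintro ⟨j, l⟩ h
    simp only [Finset.mem_sigma, Finset.mem_erase] at h ⊢
    exact ⟨h.2.2, fun h' => h.2.1 h'.symm, h.1⟩

/-- The components of an element of `cechTotal` in the `p`-th term of the Čech complex. -/
def cechRestrict (p : ℕ) (c : cechTotal A x M) : cechC A x M p := fun T => c T.1

/-- Extension of a cochain by zero to all index sets. -/
def cechExtend {p : ℕ} (c : cechC A x M p) : cechTotal A x M := fun S =>
  if h : S.card = p then c ⟨S, h⟩ else 0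

lemma cechExtend_apply {p : ℕ} (c : cechC A x M p) (T : {S : Finset (Fin n) // S.card = p}) :
    cechExtend x c T.1 = c T := dif_pos T.2

lemma cechD_apply (p : ℕ) (c : cechC A x M p) (T : {S : Finset (Fin n) // S.card = p + 1}) :
    cechD A x M p c T = cechTotalD x (cechExtend x c) T.1 := by
  rw [cechTotalD, cechD, ← Finset.sum_attach T.1]
  simp only [LinearMap.pi_apply, LinearMap.sum_apply, LinearMap.smul_apply, LinearMap.comp_apply,
    LinearMap.proj_apply]
  refine Finset.sum_congr rfl fun j _ => ?_
  rw [cechExtend, dif_pos (by simp [Finset.card_erase_of_mem j.2, T.2])]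
  rfl

lemma cechExtend_cechD {p : ℕ} (c : cechC A x M p) :
    cechExtend x (cechD A x M p c) = cechTotalD x (cechExtend x c) := by
  ext T
  by_cases hT : T.card = p + 1
  · rw [cechExtend, dif_pos hT, cechD_apply]
  · rw [cechExtend, dif_neg hT, cechTotalD]
    refine (Finset.sum_eq_zero fun j hj => ?_).symm
    have hne : (T.erase j).card ≠ p := fun h => hT (by rw [← h, Finset.card_erase_add_one hj])
    rw [cechExtend, dif_neg hne, map_zero, smul_zero]

lemma cechD_cechD (p : ℕ) (c : cechC A x M p) : cechD A x M (p + 1) (cechD A x M p c) = 0 := by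
  ext T
  rw [cechD_apply, cechExtend_cechD, cechTotalD_cechTotalD]
  rfl

lemma cechC_eq_zero_of_lt {p : ℕ} (hp : n < p) (c : cechC A x M p) : c = 0 := by
  ext T
  have := Finset.card_le_univ T.1
  rw [T.2, Fintype.card_fin] at this
  omega

variable (M) in
/-- The coboundaries in the `p`-th term of the Čech complex. -/
def cechBoundaries (p : ℕ) : Submodule A (cechC A x M p) := LinearMap.range (cechDprev A x M p)

lemma cechIsBoundary_iff {p : ℕ} {c : cechC A x M p} :
    cechIsBoundary A x M p c ↔ c ∈ cechBoundaries x M p := by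
  cases p with
  | zero => simp only [cechIsBoundary, cechBoundaries, cechDprev, LinearMap.range_zero,
      Submodule.mem_bot]
  | succ q => rfl

lemma lcVanish_iff (p : ℕ) : lcVanish A x M p ↔
    ∀ c : cechC A x M p, cechD A x M p c = 0 → c ∈ cechBoundaries x M p := by
  simp only [lcVanish, cechIsBoundary_iff]

lemma cechD_mem_cechBoundaries {p : ℕ} (c : cechC A x M p) :
    cechD A x M p c ∈ cechBoundaries x M (p + 1) := ⟨c, rfl⟩

lemma cechD_eq_zero_of_mem_cechBoundaries {p : ℕ} {c : cechC A x M p}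
    (h : c ∈ cechBoundaries x M p) : cechD A x M p c = 0 := by
  cases p with
  | zero =>
    obtain ⟨b, rfl⟩ := h
    exact map_zero _
  | succ q =>
    obtain ⟨b, rfl⟩ := h
    exact cechD_cechD x q b

lemma cechRestrict_cechTotalD_mem_cechBoundaries (p : ℕ) (b : cechTotal A x M) :
    cechRestrict x p (cechTotalD x b) ∈ cechBoundaries x M p := by
  cases p with
  | zero =>
    suffices h : cechRestrict x 0 (cechTotalD x b) = 0 by
      rw [h]
      exact zero_mem _
    ext T
    refine Finset.sum_eq_zero fun j hj => ?_
    rw [Finset.card_eq_zero.1 T.2] at hj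
    exact absurd hj (Finset.notMem_empty j)
  | succ q =>
    suffices h : cechD A x M q (cechRestrict x q b) = cechRestrict x (q + 1) (cechTotalD x b) by
      rw [← h]
      exact cechD_mem_cechBoundaries x _
    ext T
    rw [cechD_apply, cechRestrict, cechTotalD, cechTotalD]
    refine Finset.sum_congr rfl fun j hj => ?_
    have h : (T.1.erase j).card = q := by
      rw [Finset.card_erase_of_mem hj, T.2, Nat.add_sub_cancel]
    rw [cechExtend_apply x _ ⟨_, h⟩, cechRestrict]

end CechComplex

noncomputable section CechNaturality

variable {A : Type} [CommRing A] {n : ℕ} {x : Fin n → A}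
variable {M : Type} [AddCommGroup M] [Module A M]
variable {N : Type} [AddCommGroup N] [Module A N]
variable {R : Type} [CommRing R] [Algebra R A] [Module R M] [IsScalarTower R A M]
  [Module R N] [IsScalarTower R A N]

variable (θ : ∀ T : Finset (Fin n), cechL A x M T →ₗ[R] cechL A x N T)

/-- The map on the terms of the Čech complex given by a family of maps between the Čech
localizations, which need only be linear over a base ring. -/
def cechPi (p : ℕ) : cechC A x M p →ₗ[R] cechC A x N p :=
  LinearMap.pi fun T => θ T.1 ∘ₗ LinearMap.proj T

lemma cechPi_apply (p : ℕ) (c : cechC A x M p) (T : {S : Finset (Fin n) // S.card = p}) :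
    cechPi θ p c T = θ T.1 (c T) := rfl

variable {θ} (hθ : ∀ (S T : Finset (Fin n)) (h : S ⊆ T) (c : cechL A x M S),
  θ T (cechMap A x M S T h c) = cechMap A x N S T h (θ S c))
include hθ

lemma cechD_cechPi (p : ℕ) (c : cechC A x M p) :
    cechD A x N p (cechPi θ p c) = cechPi θ (p + 1) (cechD A x M p c) := by
  ext T
  rw [cechPi_apply, cechD_apply, cechD_apply, cechTotalD, cechTotalD, map_sum]
  refine Finset.sum_congr rfl fun j hj => ?_
  have h : (T.1.erase j).card = p := by rw [Finset.card_erase_of_mem hj, T.2, Nat.add_sub_cancel]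
  rw [map_cechSign_smul, hθ, cechExtend_apply x _ ⟨_, h⟩, cechExtend_apply x _ ⟨_, h⟩,
    cechPi_apply]

lemma cechPi_mem_cechBoundaries {p : ℕ} {c : cechC A x M p} (hc : c ∈ cechBoundaries x M p) :
    cechPi θ p c ∈ cechBoundaries x N p := by
  cases p with
  | zero =>
    obtain ⟨b, rfl⟩ := hc
    rw [cechDprev, LinearMap.zero_apply, map_zero]
    exact zero_mem _
  | succ q =>
    obtain ⟨b, rfl⟩ := hc
    exact ⟨cechPi θ q b, cechD_cechPi hθ q b⟩

end CechNaturality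

noncomputable section CechFunctoriality

variable {A : Type} [CommRing A] {n : ℕ} (x : Fin n → A)
variable {M : Type} [AddCommGroup M] [Module A M]
variable {N : Type} [AddCommGroup N] [Module A N]
variable {P : Type} [AddCommGroup P] [Module A P]

/-- Functoriality of the Čech localizations. -/
def cechLMap (T : Finset (Fin n)) : (M →ₗ[A] N) →ₗ[A] cechL A x M T →ₗ[A] cechL A x N T :=
  IsLocalizedModule.map (Submonoid.powers (∏ i ∈ T, x i)) (LocalizedModule.mkLinearMap _ M)
    (LocalizedModule.mkLinearMap _ N)

@[simp] lemma cechLMap_cechFrac (f : M →ₗ[A] N) (T : Finset (Fin n)) (k : ℕ) (m : M) :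
    cechLMap x T f (cechFrac x T k m) = cechFrac x T k (f m) := by
  rw [cechLMap, cechFrac, IsLocalizedModule.map_LocalizedModules]
  rfl

lemma cechLMap_cechMap (f : M →ₗ[A] N) (S T : Finset (Fin n)) (h : S ⊆ T) (c : cechL A x M S) :
    cechLMap x T f (cechMap A x M S T h c) = cechMap A x N S T h (cechLMap x S f c) := by
  obtain ⟨k, m, rfl⟩ := exists_eq_cechFrac x S c
  simp [cechMap_cechFrac]

lemma cechLMap_exact {f : M →ₗ[A] N} {g : N →ₗ[A] P} (h : Function.Exact f g)
    (T : Finset (Fin n)) : Function.Exact (cechLMap x T f) (cechLMap x T g) :=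
  LocalizedModule.map_exact _ f g h

/-- Functoriality of the terms of the Čech complex. -/
def cechCMap (p : ℕ) : (M →ₗ[A] N) →ₗ[A] cechC A x M p →ₗ[A] cechC A x N p where
  toFun f := cechPi (fun T => cechLMap x T f) p
  map_add' f g := by ext; simp [cechPi_apply]
  map_smul' a f := by ext; simp [cechPi_apply]

lemma cechCMap_apply (p : ℕ) (f : M →ₗ[A] N) (c : cechC A x M p) (T) :
    cechCMap x p f c T = cechLMap x T.1 f (c T) := rfl

lemma cechCMap_cechCMap (p : ℕ) (f : M →ₗ[A] N) (g : N →ₗ[A] P) (c : cechC A x M p) :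
    cechCMap x p g (cechCMap x p f c) = cechCMap x p (g ∘ₗ f) c := by
  ext T
  obtain ⟨k, m, h⟩ := exists_eq_cechFrac x T.1 (c T)
  simp [cechCMap_apply, h]

@[simp] lemma cechCMap_id (p : ℕ) (c : cechC A x M p) : cechCMap x p LinearMap.id c = c := by
  ext T
  obtain ⟨k, m, h⟩ := exists_eq_cechFrac x T.1 (c T)
  simp [cechCMap_apply, h]

lemma cechCMap_exact {f : M →ₗ[A] N} {g : N →ₗ[A] P} (h : Function.Exact f g) (p : ℕ) :
    Function.Exact (cechCMap x p f) (cechCMap x p g) := by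
  intro c
  constructor
  · intro hc
    have hb (T : {S : Finset (Fin n) // S.card = p}) : ∃ b, cechLMap x T.1 f b = c T :=
      (cechLMap_exact x h T.1 (c T)).1 (by rw [← cechCMap_apply, hc]; rfl)
    choose b hb using hb
    exact ⟨b, funext hb⟩
  · rintro ⟨b, rfl⟩
    ext T
    exact (cechLMap_exact x h T.1 _).2 ⟨b T, rfl⟩

lemma cechCMap_surjective {f : M →ₗ[A] N} (h : Function.Surjective f) (p : ℕ) :
    Function.Surjective (cechCMap x p f) := by
  rw [← LinearMap.exact_zero_iff_surjective M] at h
  intro c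
  exact (cechCMap_exact x h p c).1 (by rw [map_zero, LinearMap.zero_apply])

lemma cechCMap_injective {f : M →ₗ[A] N} (h : Function.Injective f) (p : ℕ) :
    Function.Injective (cechCMap x p f) := by
  rw [← LinearMap.exact_zero_iff_injective M] at h
  rw [injective_iff_map_eq_zero]
  intro c hc
  obtain ⟨b, rfl⟩ := (cechCMap_exact x h p c).1 hc
  simp

lemma cechD_cechCMap (f : M →ₗ[A] N) (p : ℕ) (c : cechC A x M p) :
    cechD A x N p (cechCMap x p f c) = cechCMap x (p + 1) f (cechD A x M p c) :=
  cechD_cechPi (cechLMap_cechMap x f) p c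

lemma cechCMap_mem_cechBoundaries (f : M →ₗ[A] N) {p : ℕ} {c : cechC A x M p}
    (h : c ∈ cechBoundaries x M p) : cechCMap x p f c ∈ cechBoundaries x N p :=
  cechPi_mem_cechBoundaries (cechLMap_cechMap x f) h

lemma exists_mem_cechBoundaries_cechCMap_eq {g : M →ₗ[A] N} (hg : Function.Surjective g) {p : ℕ}
    {c : cechC A x N p} (h : c ∈ cechBoundaries x N p) :
    ∃ b ∈ cechBoundaries x M p, cechCMap x p g b = c := by
  cases p with
  | zero =>
    obtain ⟨b, rfl⟩ := h
    exact ⟨0, zero_mem _, map_zero _⟩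
  | succ q =>
    obtain ⟨b, rfl⟩ := h
    obtain ⟨b', rfl⟩ := cechCMap_surjective x hg q b
    exact ⟨cechD A x M q b', ⟨b', rfl⟩, (cechD_cechCMap x g q b').symm⟩

lemma exists_eq_add_cechCMap {f : P →ₗ[A] M} {g : M →ₗ[A] N} (he : Function.Exact f g)
    (hg : Function.Surjective g) {p : ℕ} {c : cechC A x M p}
    (h : cechCMap x p g c ∈ cechBoundaries x N p) :
    ∃ b ∈ cechBoundaries x M p, ∃ u, c = b + cechCMap x p f u := by
  obtain ⟨b, hb, hb'⟩ := exists_mem_cechBoundaries_cechCMap_eq x hg h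
  obtain ⟨u, hu⟩ := (cechCMap_exact x he p (c - b)).1 (by rw [map_sub, hb', sub_self])
  exact ⟨b, hb, u, by rw [hu, add_sub_cancel]⟩

end CechFunctoriality

noncomputable section CohomologicalDimension

lemma isLocalizedModule_linearMap_residueField {A : Type} [CommRing A] (q : Ideal A)
    [q.IsPrime] :
    IsLocalizedModule q.primeCompl
      (IsScalarTower.toAlgHom A (A ⧸ q) q.ResidueField).toLinearMap := by
  rw [isLocalizedModule_iff_isLocalization]
  suffices h : Algebra.algebraMapSubmonoid (A ⧸ q) q.primeCompl = nonZeroDivisors (A ⧸ q) by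
    rw [h]
    infer_instance
  ext b
  obtain ⟨a, rfl⟩ := Ideal.Quotient.mk_surjective b
  rw [mem_nonZeroDivisors_iff_ne_zero, Ne, Ideal.Quotient.eq_zero_iff_mem]
  refine ⟨?_, fun h => ⟨a, h, rfl⟩⟩
  rintro ⟨c, hc, hca⟩ ha
  rw [← Ideal.Quotient.eq_zero_iff_mem, ← hca] at ha
  exact hc (Ideal.Quotient.eq_zero_iff_mem.1 ha)

lemma exists_linearMap_residueField_ne_zero {A : Type} [CommRing A] {T : Type} [AddCommGroup T]
    [Module A T] [Module.Finite A T] {q : PrimeSpectrum A} (hq : q ∈ Module.support A T) :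
    ∃ g : T →ₗ[A] q.asIdeal.ResidueField, g ≠ 0 := by
  rw [Module.mem_support_iff_nontrivial_residueField_tensorProduct] at hq
  obtain ⟨v, hv⟩ := exists_ne (0 : TensorProduct A q.asIdeal.ResidueField T)
  obtain ⟨φ, hφ⟩ : ∃ φ : Module.Dual q.asIdeal.ResidueField _, φ v ≠ 0 := by
    by_contra! h
    exact hv ((Module.forall_dual_apply_eq_zero_iff q.asIdeal.ResidueField v).1 h)
  refine ⟨φ.restrictScalars A ∘ₗ TensorProduct.mk A q.asIdeal.ResidueField T 1, fun h => hφ ?_⟩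
  suffices φ = 0 by rw [this, LinearMap.zero_apply]
  ext t
  exact LinearMap.congr_fun h t

lemma exists_linearMap_quotient_ne_zero {A : Type} [CommRing A] {T : Type} [AddCommGroup T]
    [Module A T] [Module.FinitePresentation A T] {q : PrimeSpectrum A}
    (hq : q ∈ Module.support A T) : ∃ f : T →ₗ[A] A ⧸ q.asIdeal, f ≠ 0 := by
  obtain ⟨g, hg⟩ := exists_linearMap_residueField_ne_zero hq
  have hloc := isLocalizedModule_linearMap_residueField q.asIdeal
  obtain ⟨f, s, hf⟩ := Module.FinitePresentation.exists_lift_of_isLocalizedModule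
    q.asIdeal.primeCompl (IsScalarTower.toAlgHom A (A ⧸ q.asIdeal) _).toLinearMap g
  refine ⟨f, ?_⟩
  rintro rfl
  rw [LinearMap.comp_zero] at hf
  refine hg (LinearMap.ext fun t => IsLocalizedModule.smul_injective
    (IsScalarTower.toAlgHom A (A ⧸ q.asIdeal) _).toLinearMap s ?_)
  exact (LinearMap.congr_fun hf.symm t).trans (smul_zero s).symm

lemma lt_of_mem_support_quotient {A : Type} [CommRing A] {q r : PrimeSpectrum A}
    {J : Submodule A (A ⧸ q.asIdeal)} (hJ : J ≠ ⊥)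
    (hr : r ∈ Module.support A ((A ⧸ q.asIdeal) ⧸ J)) : q < r := by
  have hann := Module.annihilator_le_of_mem_support hr
  refine lt_of_le_not_ge ?_ fun hrq => ?_
  · refine le_trans (α := Ideal A) ?_ hann
    nth_rw 1 [← Ideal.annihilator_quotient (I := q.asIdeal)]
    exact J.mkQ.annihilator_le_of_surjective J.mkQ_surjective
  obtain ⟨b, hb, hb0⟩ := J.ne_bot_iff.1 hJ
  obtain ⟨a, rfl⟩ := Ideal.Quotient.mk_surjective b
  refine hb0 (Ideal.Quotient.eq_zero_iff_mem.2 (hrq (hann ?_)))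
  rw [Module.mem_annihilator]
  intro m
  obtain ⟨m, rfl⟩ := J.mkQ_surjective m
  obtain ⟨c, rfl⟩ := Ideal.Quotient.mk_surjective m
  rw [← map_smul, Submodule.mkQ_apply, Submodule.Quotient.mk_eq_zero]
  convert J.smul_mem c hb using 1
  rw [Algebra.smul_def, Algebra.smul_def, mul_comm]
  rfl

variable {A : Type} [CommRing A] {n : ℕ} {x : Fin n → A}

section Exact

variable {M N P : Type} [AddCommGroup M] [Module A M] [AddCommGroup N] [Module A N]
  [AddCommGroup P] [Module A P]

lemma lcVanish_of_exact {f : M →ₗ[A] N} {g : N →ₗ[A] P} (hf : Function.Injective f)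
    (hg : Function.Surjective g) (he : Function.Exact f g) {p : ℕ} (hM : lcVanish A x M p)
    (hP : lcVanish A x P p) : lcVanish A x N p := by
  rw [lcVanish_iff] at *
  intro c hc
  obtain ⟨b, hb, u, rfl⟩ :=
    exists_eq_add_cechCMap x he hg (hP _ (by rw [cechD_cechCMap, hc, map_zero]))
  refine add_mem hb (cechCMap_mem_cechBoundaries x f (hM u (cechCMap_injective x hf _ ?_)))
  rw [map_zero, ← cechD_cechCMap]
  simpa [cechD_eq_zero_of_mem_cechBoundaries x hb] using hc

lemma lcVanish_right_of_exact {f : M →ₗ[A] N} {g : N →ₗ[A] P} (hf : Function.Injective f)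
    (hg : Function.Surjective g) (he : Function.Exact f g) {p : ℕ} (hN : lcVanish A x N p)
    (hM : lcVanish A x M (p + 1)) : lcVanish A x P p := by
  rw [lcVanish_iff] at *
  intro c hc
  obtain ⟨c, rfl⟩ := cechCMap_surjective x hg p c
  rw [cechD_cechCMap] at hc
  obtain ⟨u, hu⟩ := (cechCMap_exact x he (p + 1) _).1 hc
  obtain ⟨b, rfl⟩ := hM u (cechCMap_injective x hf _ (by
    rw [map_zero, ← cechD_cechCMap, hu, cechD_cechD]))
  rw [cechDprev, ← cechD_cechCMap] at hu
  have h := cechCMap_mem_cechBoundaries x g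
    (hN (c - cechCMap x p f b) (by rw [map_sub, hu, sub_self]))
  rwa [map_sub, (cechCMap_exact x he p _).2 ⟨b, rfl⟩, sub_zero] at h

lemma lcVanish_of_linearEquiv (e : M ≃ₗ[A] N) {p : ℕ} (h : lcVanish A x M p) :
    lcVanish A x N p := by
  rw [lcVanish_iff] at *
  intro c hc
  have h1 := cechCMap_mem_cechBoundaries x e.toLinearMap
    (h (cechCMap x p e.symm.toLinearMap c) (by rw [cechD_cechCMap, hc, map_zero]))
  rw [cechCMap_cechCMap] at h1
  simpa using h1

variable (M) in
lemma lcVanish_of_subsingleton [Subsingleton M] (p : ℕ) : lcVanish A x M p := by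
  rw [lcVanish_iff]
  intro c _
  rw [← cechCMap_id x p c, Subsingleton.elim (LinearMap.id : M →ₗ[A] M) 0, map_zero]
  exact zero_mem _

variable (x M) in
lemma lcVanish_of_lt {p : ℕ} (hp : n < p) : lcVanish A x M p := by
  rw [lcVanish_iff]
  intro c _
  rw [cechC_eq_zero_of_lt x hp c]
  exact zero_mem _

end Exact

variable [IsNoetherianRing A]

lemma lcVanish_of_forall_quotient_prime {p : ℕ} {Z : Set (PrimeSpectrum A)}
    (hZ : ∀ q ∈ Z, lcVanish A x (A ⧸ q.asIdeal) p) (W : Type) [AddCommGroup W] [Module A W]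
    [hW : Module.Finite A W] (hs : Module.support A W ⊆ Z) : lcVanish A x W p := by
  revert hs
  refine IsNoetherianRing.induction_on_isQuotientEquivQuotientPrime A
    (motive := fun N _ _ _ => Module.support A N ⊆ Z → lcVanish A x N p) hW ?_ ?_ ?_
  · intro N _ _ _ _ _
    exact lcVanish_of_subsingleton N p
  · intro N _ _ _ q e hN
    refine lcVanish_of_linearEquiv e.symm (hZ q (hN ?_))
    rw [e.support_eq, Module.support_eq_zeroLocus, Ideal.annihilator_quotient,
      PrimeSpectrum.mem_zeroLocus]
  · intro N₁ _ _ _ N₂ _ _ _ N₃ _ _ _ f g hf hg he h1 h3 h2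
    rw [Module.support_of_exact he hf hg, Set.union_subset_iff] at h2
    exact lcVanish_of_exact hf hg he (h1 h2.1) (h3 h2.2)

variable {T : Type} [AddCommGroup T] [Module A T] [Module.Finite A T]

lemma lcVanish_quotient_prime_of_mem_support {p : ℕ} (hT : lcVanish A x T p)
    (hsucc : ∀ (W : Type) [AddCommGroup W] [Module A W] [Module.Finite A W],
      Module.support A W ⊆ Module.support A T → lcVanish A x W (p + 1))
    (q : PrimeSpectrum A) (hq : q ∈ Module.support A T) : lcVanish A x (A ⧸ q.asIdeal) p := by
  have hwf := StrictMono.wellFoundedGT (f := PrimeSpectrum.asIdeal (R := A)) fun _ _ h => h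
  induction q using WellFoundedGT.induction with
  | ind q ih =>
    have := Module.finitePresentation_of_finite A T
    obtain ⟨f, hf⟩ := exists_linearMap_quotient_ne_zero hq
    have hrange : lcVanish A x (LinearMap.range f) p := by
      refine lcVanish_right_of_exact (LinearMap.ker f).subtype_injective f.surjective_rangeRestrict
        (fun y => by simp [Subtype.ext_iff]) hT (hsucc _ ?_)
      exact Module.support_subset_of_injective _ (Submodule.subtype_injective _)
    refine lcVanish_of_exact (Submodule.subtype_injective _) (Submodule.mkQ_surjective _)
      (LinearMap.exact_subtype_mkQ _) hrange ?_
    refine lcVanish_of_forall_quotient_prime (Z := {r | q < r}) (fun r hr => ih r hr ?_) _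
      fun r hr => lt_of_mem_support_quotient (LinearMap.range_eq_bot.not.2 hf) hr
    exact Module.mem_support_mono hr.le hq

theorem lcVanish_of_support_subset {c : ℕ} (hT : ∀ p, c ≤ p → lcVanish A x T p) {W : Type}
    [AddCommGroup W] [Module A W] [Module.Finite A W]
    (hW : Module.support A W ⊆ Module.support A T) {p : ℕ} (hp : c ≤ p) : lcVanish A x W p := by
  suffices h : ∀ k p, n < p + k → c ≤ p → ∀ (W : Type) [AddCommGroup W] [Module A W]
      [Module.Finite A W], Module.support A W ⊆ Module.support A T → lcVanish A x W p from
    h (n + 1) p (by omega) hp W hW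
  intro k
  induction k with
  | zero => exact fun p hk _ W _ _ _ _ => lcVanish_of_lt x W hk
  | succ k ih =>
    intro p hk hcp W _ _ _ hW
    exact lcVanish_of_forall_quotient_prime (lcVanish_quotient_prime_of_mem_support (hT p hcp)
      (ih (p + 1) (by omega) (by omega))) W hW

end CohomologicalDimension

section LocalFlatness

open TensorProduct

section Pushout

variable {R : Type*} [CommRing R] (M : Type*) [AddCommGroup M] [Module R M]
  {K F L' L : Type*} [AddCommGroup K] [Module R K] [AddCommGroup F] [Module R F]
  [AddCommGroup L'] [Module R L'] [AddCommGroup L] [Module R L]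
  {i : K →ₗ[R] F} {f : L' →ₗ[R] L} {φ : F →ₗ[R] L}

lemma exists_lTensor_eq_of_lTensor_eq_zero {ψ : K →ₗ[R] L'} (hψ : f ∘ₗ ψ = φ ∘ₗ i)
    (hf : Function.Injective f) (hi : f.range.comap φ ≤ i.range) (hφ : f.range ⊔ φ.range = ⊤)
    {z : M ⊗[R] L'} (hz : f.lTensor M z = 0) : ∃ u, ψ.lTensor M u = z ∧ i.lTensor M u = 0 := by
  have hψ (k : K) : f (ψ k) = φ (i k) := LinearMap.congr_fun hψ k
  have hexact : Function.Exact (ψ.prod (-i)) (f.coprod φ) := by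
    rintro ⟨a, y⟩
    refine ⟨fun h => ?_, ?_⟩
    · have hay : f a + φ y = 0 := by simpa using h
      obtain ⟨k, rfl⟩ := hi ⟨-a, by rw [map_neg, neg_eq_iff_add_eq_zero, hay]⟩
      refine ⟨-k, Prod.ext (hf ?_) (by simp)⟩
      simpa [hψ] using (eq_neg_of_add_eq_zero_left hay).symm
    · rintro ⟨k, hk⟩
      simp [← hk, hψ]
  have hsurj : Function.Surjective (f.coprod φ) := by
    rwa [← LinearMap.range_eq_top, LinearMap.range_coprod]
  obtain ⟨u, hu⟩ := (lTensor_exact M hexact hsurj ((LinearMap.inl R L' F).lTensor M z)).1 (by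
    rw [← LinearMap.lTensor_comp_apply, LinearMap.coprod_inl, hz])
  have hfst := congrArg ((LinearMap.fst R L' F).lTensor M) hu
  have hsnd := congrArg ((LinearMap.snd R L' F).lTensor M) hu
  simp only [← LinearMap.lTensor_comp_apply, LinearMap.fst_prod, LinearMap.snd_prod,
    LinearMap.fst_comp_inl, LinearMap.snd_comp_inl, LinearMap.lTensor_id, LinearMap.lTensor_zero,
    LinearMap.lTensor_neg, LinearMap.id_apply, LinearMap.zero_apply, LinearMap.neg_apply,
    neg_eq_zero] at hfst hsnd
  exact ⟨u, hfst, hsnd⟩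

lemma lTensor_injective_of_range_eq_comap (hf : Function.Injective f)
    (hi : i.range = f.range.comap φ) (hφ : f.range ⊔ φ.range = ⊤)
    (hM : Function.Injective (i.lTensor M)) : Function.Injective (f.lTensor M) := by
  have hφi (y : K) : (φ ∘ₗ i) y ∈ f.range := hi.le ⟨y, rfl⟩
  let ψ : K →ₗ[R] L' := (LinearEquiv.ofInjective f hf).symm ∘ₗ (φ ∘ₗ i).codRestrict f.range hφi
  have hψ : f ∘ₗ ψ = φ ∘ₗ i := LinearMap.ext fun y =>
    congrArg Subtype.val ((LinearEquiv.ofInjective f hf).apply_symm_apply ⟨_, hφi y⟩)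
  rw [injective_iff_map_eq_zero]
  intro z hz
  obtain ⟨u, rfl, hu⟩ := exists_lTensor_eq_of_lTensor_eq_zero M hψ hf hi.ge hφ hz
  rw [(injective_iff_map_eq_zero _).1 hM u hu, map_zero]

lemma exists_lTensor_inclusion_inf_eq {N N' : Submodule R L} {z : M ⊗[R] N}
    (hz : (Submodule.inclusion (le_sup_left : N ≤ N ⊔ N')).lTensor M z = 0) :
    ∃ u, (Submodule.inclusion (inf_le_left : N ⊓ N' ≤ N)).lTensor M u = z := by
  refine (exists_lTensor_eq_of_lTensor_eq_zero M
    (ψ := Submodule.inclusion (inf_le_left : N ⊓ N' ≤ N))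
    (i := Submodule.inclusion (inf_le_right : N ⊓ N' ≤ N'))
    (φ := Submodule.inclusion (le_sup_right : N' ≤ N ⊔ N')) rfl
    (Submodule.inclusion_injective _) ?_ ?_ hz).imp fun _ h => h.1
  · rw [Submodule.range_inclusion, Submodule.range_inclusion]
    exact fun y hy => ⟨hy, y.2⟩
  · rw [eq_top_iff, Submodule.range_inclusion, Submodule.range_inclusion]
    rintro ⟨l, hl⟩ -
    obtain ⟨a, ha, b, hb, rfl⟩ := Submodule.mem_sup.1 hl
    exact Submodule.mem_sup.2
      ⟨⟨a, Submodule.mem_sup_left ha⟩, ha, ⟨b, Submodule.mem_sup_right hb⟩, hb, rfl⟩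

end Pushout

section TensorSubmodule

variable {R : Type*} [CommRing R] (A : Type*) [CommRing A] [Algebra R A] {M : Type*}
  [AddCommGroup M] [Module R M] [Module A M] [IsScalarTower R A M] {L : Type*} [AddCommGroup L]
  [Module R L]

lemma lTensor_mem_pow_smul_top (I : Ideal R) {t : ℕ} {K : Type*} [AddCommGroup K] [Module R K]
    {f : K →ₗ[R] L} (hf : ∀ k, f k ∈ I ^ t • (⊤ : Submodule R L)) (z : M ⊗[R] K) :
    f.lTensor M z ∈ (I.map (algebraMap R A)) ^ t • (⊤ : Submodule A (M ⊗[R] L)) := by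
  induction z using TensorProduct.induction_on with
  | zero => simp
  | add a b ha hb => rw [map_add]; exact add_mem ha hb
  | tmul m k =>
    rw [LinearMap.lTensor_tmul]
    refine Submodule.smul_induction_on (hf k) (fun r hr y _ => ?_) fun a b ha hb => ?_
    · rw [TensorProduct.tmul_smul, ← algebraMap_smul A r, ← Ideal.map_pow]
      exact Submodule.smul_mem_smul (Ideal.mem_map_of_mem _ hr) trivial
    · rw [TensorProduct.tmul_add]
      exact add_mem ha hb

variable (R M L) in
lemma finite_tensorProduct [Module.Finite A M] [Module.Finite R L] : Module.Finite A (M ⊗[R] L) :=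
  Module.Finite.equiv (AlgebraTensorModule.cancelBaseChange R A A M L)

end TensorSubmodule

variable {R : Type*} [CommRing R] [IsLocalRing R] {M : Type*} [AddCommGroup M] [Module R M]

open IsLocalRing

lemma exists_notMem_smul_mem_of_maximalIdeal_pow_le {L : Type*} [AddCommGroup L] [Module R L]
    {N : Submodule R L} {t : ℕ} (hN : maximalIdeal R ^ t • (⊤ : Submodule R L) ≤ N) (hNt : N ≠ ⊤) :
    ∃ v ∉ N, ∀ r ∈ maximalIdeal R, r • v ∈ N := by
  induction t with
  | zero => exact absurd (top_le_iff.1 (by simpa using hN)) hNt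
  | succ t ih =>
    by_cases h : maximalIdeal R ^ t • (⊤ : Submodule R L) ≤ N
    · exact ih h
    · obtain ⟨v, hv, hvN⟩ := SetLike.not_le_iff_exists.1 h
      refine ⟨v, hvN, fun r hr => hN ?_⟩
      rw [pow_succ', Submodule.mul_smul]
      exact Submodule.smul_mem_smul hr hv

lemma lTensor_subtype_injective_of_maximalIdeal_pow_le
    (hM : Function.Injective ((maximalIdeal R).subtype.lTensor M)) {L : Type*} [AddCommGroup L]
    [Module R L] [IsNoetherian R L] {t : ℕ} (N : Submodule R L)
    (hN : maximalIdeal R ^ t • (⊤ : Submodule R L) ≤ N) :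
    Function.Injective (N.subtype.lTensor M) := by
  induction N using IsNoetherian.induction with | hgt N ih
  obtain rfl | hNt := eq_or_ne N ⊤
  · exact (LinearEquiv.lTensor M Submodule.topEquiv).injective
  obtain ⟨v, hvN, hv⟩ := exists_notMem_smul_mem_of_maximalIdeal_pow_le hN hNt
  let N' := N ⊔ Submodule.span R {v}
  have hvN' : v ∈ N' := Submodule.mem_sup_right (Submodule.mem_span_singleton_self v)
  have hNN' : N < N' := SetLike.lt_iff_le_and_exists.2 ⟨le_sup_left, v, hvN', hvN⟩
  have hstep : Function.Injective ((Submodule.inclusion hNN'.le).lTensor M) := by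
    refine lTensor_injective_of_range_eq_comap M (i := (maximalIdeal R).subtype)
      (φ := LinearMap.toSpanSingleton R N' ⟨v, hvN'⟩) (Submodule.inclusion_injective _) ?_ ?_ hM
    · rw [Submodule.range_subtype, Submodule.range_inclusion]
      refine le_antisymm hv fun r hr => ?_
      by_contra hru
      exact hvN ((N.smul_mem_iff_of_isUnit (by simpa using hru)).1 hr)
    · rw [eq_top_iff, Submodule.range_inclusion]
      rintro ⟨l, hl⟩ -
      obtain ⟨a, ha, b, hb, rfl⟩ := Submodule.mem_sup.1 hl
      obtain ⟨r, rfl⟩ := Submodule.mem_span_singleton.1 hb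
      exact Submodule.mem_sup.2 ⟨⟨a, hNN'.le ha⟩, ha, _, ⟨r, rfl⟩, rfl⟩
  rw [← Submodule.subtype_comp_inclusion N N' hNN'.le, LinearMap.lTensor_comp]
  exact (ih N' hNN' (hN.trans hNN'.le)).comp hstep

theorem flat_of_lTensor_maximalIdeal_injective [IsNoetherianRing R] (A : Type*) [CommRing A]
    [Algebra R A] [IsNoetherianRing A] [Module A M] [IsScalarTower R A M] [Module.Finite A M]
    (hA : (maximalIdeal R).map (algebraMap R A) ≤ Ideal.jacobson ⊥)
    (hM : Function.Injective ((maximalIdeal R).subtype.lTensor M)) : Module.Flat R M := by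
  rw [Module.Flat.iff_lTensor_injective']
  intro I
  rw [injective_iff_map_eq_zero]
  intro z hz
  have := finite_tensorProduct R A M I
  rw [← Submodule.mem_bot A, ← Ideal.iInf_pow_smul_eq_bot_of_le_jacobson _ hA, Submodule.mem_iInf]
  intro t
  obtain ⟨c, hc⟩ := Ideal.exists_pow_inf_eq_pow_smul (maximalIdeal R) I
  let N : Ideal R := maximalIdeal R ^ (t + c) • ⊤
  have hsup : (Submodule.inclusion (le_sup_left : I ≤ I ⊔ N)).lTensor M z = 0 := by
    refine (injective_iff_map_eq_zero _).1
      (lTensor_subtype_injective_of_maximalIdeal_pow_le hM (I ⊔ N) le_sup_right) _ ?_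
    rwa [← LinearMap.lTensor_comp_apply, Submodule.subtype_comp_inclusion]
  obtain ⟨u, rfl⟩ := exists_lTensor_inclusion_inf_eq M hsup
  refine lTensor_mem_pow_smul_top A (maximalIdeal R) (fun k => ?_) u
  rw [Submodule.mem_smul_top_iff]
  have hk : (k : R) ∈ N ⊓ I := k.2.symm
  rw [hc (t + c) (Nat.le_add_left c t), Nat.add_sub_cancel] at hk
  exact Submodule.smul_mono le_rfl inf_le_right hk

end LocalFlatness

section TorRigidity

open TensorProduct IsLocalRing

section Resolution

variable {R : Type*} [CommRing R] {F₀ F₁ F₂ : Type*} [AddCommGroup F₀] [Module R F₀]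
  [AddCommGroup F₁] [Module R F₁] [AddCommGroup F₂] [Module R F₂] {d₁ : F₂ →ₗ[R] F₁}
  {d₀ : F₁ →ₗ[R] F₀} {M : Type*} [AddCommGroup M] [Module R M]

lemma lTensor_range_subtype_injective (hd : d₀ ∘ₗ d₁ = 0)
    (hM : Function.Exact (d₁.lTensor M) (d₀.lTensor M)) :
    Function.Injective (d₀.range.subtype.lTensor M) := by
  rw [injective_iff_map_eq_zero]
  intro z hz
  obtain ⟨u, rfl⟩ := LinearMap.lTensor_surjective M d₀.surjective_rangeRestrict z
  rw [← LinearMap.lTensor_comp_apply] at hz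
  obtain ⟨y, rfl⟩ := (hM u).1 hz
  have hzero : d₀.rangeRestrict ∘ₗ d₁ = 0 :=
    LinearMap.ext fun y => Subtype.ext (LinearMap.congr_fun hd y)
  rw [← LinearMap.lTensor_comp_apply, hzero, LinearMap.lTensor_zero, LinearMap.zero_apply]

lemma lTensor_subtype_injective_of_exact [Module.Projective R F₀] {I : Ideal R}
    {ε : F₀ →ₗ[R] R ⧸ I} (hε : Function.Surjective ε) (hdε : Function.Exact d₀ ε)
    (hd : d₀ ∘ₗ d₁ = 0) (hM : Function.Exact (d₁.lTensor M) (d₀.lTensor M)) :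
    Function.Injective (I.subtype.lTensor M) := by
  obtain ⟨φ, hφ⟩ := Module.projective_lifting_property I.mkQ ε I.mkQ_surjective
  refine lTensor_injective_of_range_eq_comap M (φ := φ) I.injective_subtype ?_ ?_
    (lTensor_range_subtype_injective hd hM)
  · rw [Submodule.range_subtype, Submodule.range_subtype, ← hdε.linearMap_ker_eq, ← hφ,
      LinearMap.ker_comp, Submodule.ker_mkQ]
  · rw [← hφ, LinearMap.coe_comp] at hε
    rw [Submodule.range_subtype, eq_top_iff]
    intro r _
    obtain ⟨y, hy⟩ := hε (I.mkQ r)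
    have hr : r - φ y ∈ I := (Submodule.Quotient.eq I).1 hy.symm
    exact Submodule.mem_sup.2 ⟨_, hr, _, ⟨y, rfl⟩, sub_add_cancel _ _⟩

lemma exists_comp_eq_of_exact {P : Type*} [AddCommGroup P] [Module R P] [Module.Projective R P]
    (hd : Function.Exact d₁ d₀) {u : P →ₗ[R] F₁} (hu : d₀ ∘ₗ u = 0) :
    ∃ s : P →ₗ[R] F₂, d₁ ∘ₗ s = u := by
  obtain ⟨s, hs⟩ := Module.projective_lifting_property d₁.rangeRestrict
    (u.codRestrict d₁.range fun y => (hd _).1 (LinearMap.congr_fun hu y))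
    d₁.surjective_rangeRestrict
  exact ⟨s, LinearMap.ext fun y => congrArg Subtype.val (LinearMap.congr_fun hs y)⟩

end Resolution

variable {R : Type*} [CommRing R] {F : ℕ → Type*} [∀ q, AddCommGroup (F q)]
  [∀ q, Module R (F q)] {dF : ∀ q : ℕ, F (q + 1) →ₗ[R] F q} {I : Ideal R} {ε : F 0 →ₗ[R] R ⧸ I}

lemma exists_homotopy_smul [∀ q, Module.Projective R (F q)]
    (hexact : ∀ q : ℕ, Function.Exact (dF (q + 1)) (dF q)) (hexact0 : Function.Exact (dF 0) ε)
    {r : R} (hr : r ∈ I) (q : ℕ) :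
    ∃ (s : F q →ₗ[R] F (q + 1)) (s' : F (q + 1) →ₗ[R] F (q + 2)),
      dF (q + 1) ∘ₗ s' + s ∘ₗ dF q = r • LinearMap.id := by
  induction q with
  | zero =>
    obtain ⟨s, hs⟩ := exists_comp_eq_of_exact hexact0 (u := r • LinearMap.id) (by
      ext y
      obtain ⟨a, ha⟩ := Ideal.Quotient.mk_surjective (ε y)
      rw [LinearMap.comp_smul, LinearMap.smul_apply, LinearMap.comp_id, LinearMap.zero_apply, ← ha,
        ← Ideal.Quotient.mk_eq_mk, ← Submodule.Quotient.mk_smul, Submodule.Quotient.mk_eq_zero]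
      exact Ideal.mul_mem_right _ _ hr)
    obtain ⟨s', hs'⟩ := exists_comp_eq_of_exact (hexact 0) (u := r • LinearMap.id - s ∘ₗ dF 0) (by
      rw [LinearMap.comp_sub, ← LinearMap.comp_assoc, hs, LinearMap.comp_smul, LinearMap.smul_comp,
        LinearMap.comp_id, LinearMap.id_comp, sub_self])
    exact ⟨s, s', by rw [hs', sub_add_cancel]⟩
  | succ q ih =>
    obtain ⟨s, s', h⟩ := ih
    obtain ⟨s'', hs''⟩ := exists_comp_eq_of_exact (hexact (q + 1))
      (u := r • LinearMap.id - s' ∘ₗ dF (q + 1)) (by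
        rw [LinearMap.comp_sub, ← LinearMap.comp_assoc, eq_sub_of_add_eq h, LinearMap.sub_comp,
          LinearMap.comp_assoc, (hexact q).linearMap_comp_eq_zero, LinearMap.comp_zero, sub_zero,
          LinearMap.comp_smul, LinearMap.smul_comp, LinearMap.comp_id, LinearMap.id_comp,
          sub_self])
    exact ⟨s', s'', by rw [hs'', sub_add_cancel]⟩

lemma lTensor_exact_succ [IsLocalRing R] [IsNoetherianRing R] {A : Type*} [CommRing A] [Algebra R A]
    [IsLocalRing A] [IsNoetherianRing A] {M : Type*} [AddCommGroup M] [Module R M] [Module A M]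
    [IsScalarTower R A M] [Module.Finite A M] [∀ q, Module.Projective R (F q)]
    {ε : F 0 →ₗ[R] R ⧸ maximalIdeal R}
    (hexact : ∀ q : ℕ, Function.Exact (dF (q + 1)) (dF q)) (hexact0 : Function.Exact (dF 0) ε)
    (hsurj : Function.Surjective ε) (hM : Function.Exact ((dF 1).lTensor M) ((dF 0).lTensor M))
    (q : ℕ) : Function.Exact ((dF (q + 1)).lTensor M) ((dF q).lTensor M) := by
  by_cases hA : (maximalIdeal R).map (algebraMap R A) ≤ maximalIdeal A
  · have := flat_of_lTensor_maximalIdeal_injective A (hA.trans (maximalIdeal_le_jacobson _))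
      (lTensor_subtype_injective_of_exact hsurj hexact0 (hexact 0).linearMap_comp_eq_zero hM)
    exact Module.Flat.lTensor_exact M (hexact q)
  · rw [Ideal.map_le_iff_le_comap, SetLike.not_le_iff_exists] at hA
    obtain ⟨r, hr, hrA⟩ := hA
    obtain ⟨s, s', h⟩ := exists_homotopy_smul hexact hexact0 hr q
    replace hrA : IsUnit (algebraMap R A r) := by simpa using hrA
    intro z
    refine ⟨fun hz => ?_, ?_⟩
    · have hrz : (dF (q + 1)).lTensor M (s'.lTensor M z) = algebraMap R A r • z := by
        have := LinearMap.congr_fun (congrArg (LinearMap.lTensor M) h) z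
        simpa [LinearMap.lTensor_comp_apply, LinearMap.lTensor_add, hz] using this
      obtain ⟨b, hb⟩ := hrA.exists_left_inv
      refine ⟨b • s'.lTensor M z, ?_⟩
      rw [← AlgebraTensorModule.coe_lTensor (A := A), map_smul, AlgebraTensorModule.coe_lTensor,
        hrz, smul_smul, hb, one_smul]
    · rintro ⟨y, rfl⟩
      rw [← LinearMap.lTensor_comp_apply, (hexact q).linearMap_comp_eq_zero, LinearMap.lTensor_zero,
        LinearMap.zero_apply]

section Localization

variable {A : Type*} [CommRing A] (S : Submonoid A) {X Y Z X' Y' Z' : Type*}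
  [AddCommGroup X] [Module A X] [AddCommGroup Y] [Module A Y] [AddCommGroup Z] [Module A Z]
  [AddCommGroup X'] [Module A X'] [AddCommGroup Y'] [Module A Y'] [AddCommGroup Z'] [Module A Z']
  (ιX : X →ₗ[A] X') (ιY : Y →ₗ[A] Y') (ιZ : Z →ₗ[A] Z') [IsLocalizedModule S ιX]
  [IsLocalizedModule S ιY] [IsLocalizedModule S ιZ] {f : X →ₗ[A] Y} {g : Y →ₗ[A] Z}

lemma exact_isLocalizedModule_map_iff (hgf : g ∘ₗ f = 0) :
    Function.Exact (IsLocalizedModule.map S ιX ιY f) (IsLocalizedModule.map S ιY ιZ g) ↔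
      ∀ y, g y = 0 → ∃ s ∈ S, ∃ x, s • y = f x := by
  constructor
  · intro h y hy
    obtain ⟨x', hx'⟩ := (h (ιY y)).1 (by rw [IsLocalizedModule.map_apply, hy, map_zero])
    obtain ⟨⟨x, s⟩, hx⟩ := IsLocalizedModule.surj S ιX x'
    rw [Submonoid.smul_def] at hx
    have hy' : ιY ((s : A) • y) = ιY (f x) := by
      rw [map_smul, ← hx', ← map_smul, hx, IsLocalizedModule.map_apply]
    obtain ⟨t, ht⟩ := IsLocalizedModule.exists_of_eq (S := S) hy'
    rw [Submonoid.smul_def, Submonoid.smul_def] at ht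
    exact ⟨t * s, (t * s).2, (t : A) • x, by rw [map_smul, ← ht, smul_smul]⟩
  · intro h y'
    refine ⟨fun hy' => ?_, ?_⟩
    · obtain ⟨⟨y, s⟩, hy⟩ := IsLocalizedModule.surj S ιY y'
      rw [Submonoid.smul_def] at hy
      have hgy : ιZ (g y) = ιZ 0 := by
        rw [← IsLocalizedModule.map_apply S ιY ιZ g y, ← hy, map_smul, hy', smul_zero, map_zero]
      obtain ⟨t, ht⟩ := IsLocalizedModule.exists_of_eq (S := S) hgy
      rw [Submonoid.smul_def, Submonoid.smul_def, smul_zero, ← map_smul] at ht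
      obtain ⟨r, hr, x, hx⟩ := h _ ht
      refine ⟨IsLocalizedModule.mk' ιX x (⟨r, hr⟩ * t * s), ?_⟩
      rw [IsLocalizedModule.map_mk', IsLocalizedModule.mk'_eq_iff, ← hx, map_smul, map_smul, ← hy,
        smul_smul, smul_smul]
      rfl
    · rintro ⟨x', rfl⟩
      obtain ⟨⟨x, s⟩, rfl⟩ := IsLocalizedModule.mk'_surjective S ιX x'
      rw [Function.uncurry_apply_pair, IsLocalizedModule.map_mk', IsLocalizedModule.map_mk',
        ← LinearMap.comp_apply, hgf, LinearMap.zero_apply, IsLocalizedModule.mk'_zero]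

end Localization

section Tor

variable {R : Type} [CommRing R] {A : Type} [CommRing A] [Algebra R A]
  {M : Type} [AddCommGroup M] [Module R M] [Module A M] [IsScalarTower R A M]
  {F : ℕ → Type} [∀ q, AddCommGroup (F q)] [∀ q, Module R (F q)]
  {dF : ∀ q : ℕ, F (q + 1) →ₗ[R] F q}

variable (A M dF) in
lemma finite_torMod [IsNoetherianRing A] [Module.Finite A M] [∀ q, Module.Finite R (F q)] (q : ℕ) :
    Module.Finite A (torMod R A M F dF q) := by
  have := finite_tensorProduct R A M (F q)
  unfold torMod
  infer_instance

lemma notMem_support_torMod_succ_iff (q : ℕ) (p : PrimeSpectrum A) :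
    p ∉ Module.support A (torMod R A M F dF (q + 1)) ↔
      ∀ z, AlgebraTensorModule.lTensor A M (dF q) z = 0 →
        ∃ s ∈ p.asIdeal.primeCompl, ∃ y,
          s • z = AlgebraTensorModule.lTensor A M (dF (q + 1)) y := by
  rw [Module.notMem_support_iff']
  let B := (LinearMap.range (torD R A M F dF (q + 1))).comap
    (LinearMap.ker (torDout R A M F dF (q + 1))).subtype
  constructor
  · intro h z hz
    obtain ⟨s, hs, hsz⟩ := h (B.mkQ ⟨z, hz⟩)
    obtain ⟨y, hy⟩ := (Submodule.Quotient.mk_eq_zero B).1 hsz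
    exact ⟨s, hs, y, hy.symm⟩
  · intro h m
    obtain ⟨⟨z, hz⟩, rfl⟩ := B.mkQ_surjective m
    obtain ⟨s, hs, y, hy⟩ := h z hz
    exact ⟨s, hs, (Submodule.Quotient.mk_eq_zero B).2 ⟨y, hy.symm⟩⟩

lemma notMem_support_torMod_succ_iff_exact (hd : ∀ q, dF q ∘ₗ dF (q + 1) = 0) (q : ℕ)
    (p : PrimeSpectrum A) :
    p ∉ Module.support A (torMod R A M F dF (q + 1)) ↔
      Function.Exact ((dF (q + 1)).lTensor (LocalizedModule p.asIdeal.primeCompl M))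
        ((dF q).lTensor (LocalizedModule p.asIdeal.primeCompl M)) := by
  let S := p.asIdeal.primeCompl
  let ι q := AlgebraTensorModule.rTensor R (F q) (LocalizedModule.mkLinearMap S M)
  rw [notMem_support_torMod_succ_iff, ← exact_isLocalizedModule_map_iff S (ι _) (ι _) (ι _)]
  · rw [IsLocalizedModule.map_lTensor, IsLocalizedModule.map_lTensor,
      AlgebraTensorModule.coe_lTensor, AlgebraTensorModule.coe_lTensor]
  · rw [← AlgebraTensorModule.lTensor_comp, hd]
    exact LinearMap.ext fun z => LinearMap.congr_fun (LinearMap.lTensor_zero M) z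

theorem lcVanish_torMod_succ [IsLocalRing R] [IsNoetherianRing R] [IsNoetherianRing A]
    [Module.Finite A M] [∀ q, Module.Finite R (F q)] [∀ q, Module.Projective R (F q)]
    {ε : F 0 →ₗ[R] R ⧸ maximalIdeal R} {n : ℕ} {x : Fin n → A}
    (hexact : ∀ q : ℕ, Function.Exact (dF (q + 1)) (dF q)) (hexact0 : Function.Exact (dF 0) ε)
    (hsurj : Function.Surjective ε) {c : ℕ}
    (h : ∀ p, c ≤ p → lcVanish A x (torMod R A M F dF 1) p) (q : ℕ) {p : ℕ} (hp : c ≤ p) :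
    lcVanish A x (torMod R A M F dF (q + 1)) p := by
  have := finite_torMod A M dF 1
  have := finite_torMod A M dF (q + 1)
  have hd q : dF q ∘ₗ dF (q + 1) = 0 := (hexact q).linearMap_comp_eq_zero
  refine lcVanish_of_support_subset h (fun P hP => ?_) hp
  contrapose! hP
  rw [notMem_support_torMod_succ_iff_exact hd] at hP ⊢
  exact lTensor_exact_succ (A := Localization.AtPrime P.asIdeal) hexact hexact0 hsurj hP q

end Tor

end TorRigidity

noncomputable section Gradings

open TensorProduct

/-- A `ℤ`-grading of the `A`-module `N` in which multiplication by `x j` has degree `w j`, given by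
its `R`-linear projections onto the graded pieces. Unlike a family of additive subgroups,
projections pass to tensor products, kernels and Čech localizations without any choice. -/
structure GradedProjections (R : Type) [CommRing R] {A : Type} [CommRing A] {n : ℕ} (x : Fin n → A)
    (w : Fin n → ℤ) (N : Type) [AddCommGroup N] [Module R N] [Module A N] where
  /-- The projection onto the graded piece of a given degree. -/
  proj : ℤ → N →ₗ[R] N
  proj_smul : ∀ j ν m, proj (ν + w j) (x j • m) = x j • proj ν m
  proj_self : ∀ ν m, proj ν (proj ν m) = proj ν m
  proj_of_ne : ∀ ν ν' m, ν ≠ ν' → proj ν (proj ν' m) = 0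
  exists_sum_proj : ∀ m, ∃ s : Finset ℤ, ∀ t, s ⊆ t → ∑ ν ∈ t, proj ν m = m

namespace GradedProjections

variable {R : Type} [CommRing R] {A : Type} [CommRing A] {n : ℕ} {x : Fin n → A} {w : Fin n → ℤ}
variable {N : Type} [AddCommGroup N] [Module R N] [Module A N]
variable {N' : Type} [AddCommGroup N'] [Module R N'] [Module A N']
variable (G : GradedProjections R x w N) (G' : GradedProjections R x w N')

/-- `f` is a homomorphism of graded modules, of degree zero. -/
def IsGradedHom (f : N →ₗ[A] N') : Prop := ∀ ν m, f (G.proj ν m) = G'.proj ν (f m)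

lemma proj_prod_smul (T : Finset (Fin n)) (ν : ℤ) (m : N) :
    G.proj (ν + ∑ i ∈ T, w i) ((∏ i ∈ T, x i) • m) = (∏ i ∈ T, x i) • G.proj ν m := by
  induction T using Finset.induction_on generalizing ν with
  | empty => simp
  | insert a T ha ih =>
    rw [Finset.prod_insert ha, Finset.sum_insert ha, mul_smul, mul_smul, add_comm (w a),
      ← add_assoc, G.proj_smul, ih]

lemma proj_prod_pow_smul (T : Finset (Fin n)) (b : ℕ) (ν : ℤ) (m : N) :
    G.proj (ν + b * ∑ i ∈ T, w i) ((∏ i ∈ T, x i) ^ b • m) = (∏ i ∈ T, x i) ^ b • G.proj ν m := by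
  induction b generalizing ν with
  | zero => simp
  | succ b ih =>
    rw [pow_succ', mul_smul, mul_smul, ← ih, ← G.proj_prod_smul]
    congr 2
    push_cast
    ring

variable [Algebra R A] [IsScalarTower R A N] [IsScalarTower R A N']

/-- The projection onto the degree `μ` part of a Čech localization. -/
def projL (μ : ℤ) (T : Finset (Fin n)) : cechL A x N T →ₗ[R] cechL A x N T :=
  cechLift x T (fun k => cechFracHom x T R k ∘ₗ G.proj (μ + k * ∑ i ∈ T, w i))
    (fun k l m => by
      have hμ : μ + (k + l : ℕ) * ∑ i ∈ T, w i = μ + k * ∑ i ∈ T, w i + l * ∑ i ∈ T, w i := by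
        push_cast
        ring
      simp only [LinearMap.comp_apply, cechFracHom, LinearMap.coe_mk, AddHom.coe_mk]
      rw [hμ, G.proj_prod_pow_smul, ← cechFrac_eq_cechFrac_add])

@[simp] lemma projL_cechFrac (μ : ℤ) (T : Finset (Fin n)) (k : ℕ) (m : N) :
    G.projL μ T (cechFrac x T k m) = cechFrac x T k (G.proj (μ + k * ∑ i ∈ T, w i) m) :=
  cechLift_cechFrac x T _ _ k m

lemma projL_projL (μ : ℤ) (T : Finset (Fin n)) (c : cechL A x N T) :
    G.projL μ T (G.projL μ T c) = G.projL μ T c := by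
  obtain ⟨k, m, rfl⟩ := exists_eq_cechFrac x T c
  rw [projL_cechFrac, projL_cechFrac, G.proj_self]

lemma projL_cechMap (μ : ℤ) (S T : Finset (Fin n)) (h : S ⊆ T) (c : cechL A x N S) :
    G.projL μ T (cechMap A x N S T h c) = cechMap A x N S T h (G.projL μ S c) := by
  obtain ⟨k, m, rfl⟩ := exists_eq_cechFrac x S c
  rw [cechMap_cechFrac, projL_cechFrac, projL_cechFrac, cechMap_cechFrac, ← G.proj_prod_pow_smul,
    ← Finset.sum_sdiff h]
  congr 3
  ring

/-- The projection onto the degree `μ` part of a term of the Čech complex. -/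
def projC (μ : ℤ) (p : ℕ) : cechC A x N p →ₗ[R] cechC A x N p := cechPi (G.projL μ) p

lemma projC_apply (μ : ℤ) (p : ℕ) (c : cechC A x N p) (T : {S : Finset (Fin n) // S.card = p}) :
    G.projC μ p c T = G.projL μ T.1 (c T) := rfl

lemma projC_projC (μ : ℤ) (p : ℕ) (c : cechC A x N p) :
    G.projC μ p (G.projC μ p c) = G.projC μ p c :=
  funext fun T => G.projL_projL μ T.1 (c T)

lemma cechD_projC (μ : ℤ) (p : ℕ) (c : cechC A x N p) :
    cechD A x N p (G.projC μ p c) = G.projC μ (p + 1) (cechD A x N p c) :=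
  cechD_cechPi (G.projL_cechMap μ) p c

lemma projC_mem_cechBoundaries (μ : ℤ) {p : ℕ} {c : cechC A x N p}
    (h : c ∈ cechBoundaries x N p) : G.projC μ p c ∈ cechBoundaries x N p :=
  cechPi_mem_cechBoundaries (G.projL_cechMap μ) h

variable {G G'} in
lemma IsGradedHom.cechCMap_projC {f : N →ₗ[A] N'} (hf : G.IsGradedHom G' f) (μ : ℤ) (p : ℕ)
    (c : cechC A x N p) : cechCMap x p f (G.projC μ p c) = G'.projC μ p (cechCMap x p f c) := by
  ext T
  obtain ⟨k, m, h⟩ := exists_eq_cechFrac x T.1 (c T)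
  rw [cechCMap_apply, projC_apply, projC_apply, cechCMap_apply, h, projL_cechFrac,
    cechLMap_cechFrac, cechLMap_cechFrac, projL_cechFrac, hf]

/-- The degree `μ` part of the class of a cochain. -/
def cohomologyClass (i : ℕ) (μ : ℤ) : cechC A x N i →ₗ[R] cechC A x N i ⧸ cechBoundaries x N i :=
  (cechBoundaries x N i).mkQ.restrictScalars R ∘ₗ G.projC μ i

lemma cohomologyClass_eq_zero_iff (i : ℕ) (μ : ℤ) (c : cechC A x N i) :
    G.cohomologyClass i μ c = 0 ↔ G.projC μ i c ∈ cechBoundaries x N i :=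
  Submodule.Quotient.mk_eq_zero _

/-- The degree `μ` part of the `i`-th local cohomology of `N`, as an `R`-submodule of the cochains
modulo coboundaries. -/
def cohomology (i : ℕ) (μ : ℤ) : Submodule R (cechC A x N i ⧸ cechBoundaries x N i) :=
  ((LinearMap.ker (cechD A x N i)).restrictScalars R).map (G.cohomologyClass i μ)

lemma cohomologyClass_mem_cohomology {i : ℕ} (μ : ℤ) {z : cechC A x N i}
    (hz : cechD A x N i z = 0) : G.cohomologyClass i μ z ∈ G.cohomology i μ :=
  ⟨z, hz, rfl⟩

lemma cohomology_eq_bot_iff {i : ℕ} {μ : ℤ} :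
    G.cohomology i μ = ⊥ ↔
      ∀ z, cechD A x N i z = 0 → G.projC μ i z ∈ cechBoundaries x N i := by
  rw [cohomology, eq_bot_iff, Submodule.map_le_iff_le_comap]
  exact forall₂_congr fun z _ => G.cohomologyClass_eq_zero_iff i μ z

lemma cohomology_eq_bot_of_lcVanish {i : ℕ} (h : lcVanish A x N i) (μ : ℤ) :
    G.cohomology i μ = ⊥ :=
  G.cohomology_eq_bot_iff.2 fun z hz => G.projC_mem_cechBoundaries μ ((lcVanish_iff x i).1 h z hz)

section Pieces

variable {ℳ : ℤ → AddSubgroup N} (hℳ : ∀ ν m, m ∈ ℳ ν ↔ G.proj ν m = m)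
include hℳ

lemma mem_cechGrade_iff (μ : ℤ) (T : Finset (Fin n)) (c : cechL A x N T) :
    c ∈ cechGrade A x N ℳ w μ T ↔ G.projL μ T c = c := by
  constructor
  · intro hc
    induction hc using AddSubgroup.closure_induction with
    | mem c hc =>
      obtain ⟨m, k, hm, rfl⟩ := hc
      exact (G.projL_cechFrac μ T k m).trans (congrArg (cechFrac x T k) ((hℳ _ m).1 hm))
    | zero => exact map_zero _
    | add a b _ _ ha hb => rw [map_add, ha, hb]
    | neg a _ ha => rw [map_neg, ha]
  · intro hc
    obtain ⟨k, m, rfl⟩ := exists_eq_cechFrac x T c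
    rw [← hc, projL_cechFrac]
    exact AddSubgroup.subset_closure ⟨_, k, (hℳ _ _).2 (G.proj_self _ m), rfl⟩

lemma lcGradeNonzero_iff {i : ℕ} {μ : ℤ} :
    lcGradeNonzero A x N ℳ w i μ ↔ G.cohomology i μ ≠ ⊥ := by
  simp only [lcGradeNonzero, ne_eq, G.cohomology_eq_bot_iff, cechIsBoundary_iff,
    G.mem_cechGrade_iff hℳ]
  constructor
  · rintro ⟨c, hc, hz, hb⟩ h
    have hcμ : G.projC μ i c = c := funext hc
    exact hb (hcμ ▸ h c hz)
  · intro h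
    push Not at h
    obtain ⟨z, hz, hb⟩ := h
    exact ⟨G.projC μ i z, fun T => G.projL_projL μ T.1 (z T), by rw [cechD_projC, hz, map_zero], hb⟩

end Pieces

section Tensor

variable (L : Type) [AddCommGroup L] [Module R L]

/-- The grading of `N ⊗[R] L` in which `L` has degree zero. -/
def tensor : GradedProjections R x w (N ⊗[R] L) where
  proj ν := (G.proj ν).rTensor L
  proj_smul j ν z := by
    induction z with
    | zero => simp
    | add a b ha hb => rw [smul_add, map_add, map_add, ha, hb, smul_add]
    | tmul a b =>
      rw [smul_tmul', LinearMap.rTensor_tmul, LinearMap.rTensor_tmul, smul_tmul', G.proj_smul]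
  proj_self ν z := by
    rw [← LinearMap.rTensor_comp_apply]
    congr 2
    exact LinearMap.ext (G.proj_self ν)
  proj_of_ne ν ν' z h := by
    have h0 : G.proj ν ∘ₗ G.proj ν' = 0 := LinearMap.ext fun m => G.proj_of_ne ν ν' m h
    rw [← LinearMap.rTensor_comp_apply, h0, LinearMap.rTensor_zero, LinearMap.zero_apply]
  exists_sum_proj z := by
    induction z with
    | zero => exact ⟨∅, fun t _ => by simp⟩
    | add a b ha hb =>
      obtain ⟨s, hs⟩ := ha
      obtain ⟨s', hs'⟩ := hb
      refine ⟨s ∪ s', fun t ht => ?_⟩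
      simp only [map_add, Finset.sum_add_distrib]
      rw [hs t (Finset.union_subset_left ht), hs' t (Finset.union_subset_right ht)]
    | tmul a b =>
      obtain ⟨s, hs⟩ := G.exists_sum_proj a
      refine ⟨s, fun t ht => ?_⟩
      simp only [LinearMap.rTensor_tmul]
      rw [← sum_tmul, hs t ht]

variable {L} in
lemma isGradedHom_lTensor {L' : Type} [AddCommGroup L'] [Module R L'] (f : L →ₗ[R] L') :
    (G.tensor L).IsGradedHom (G.tensor L') (AlgebraTensorModule.lTensor A N f) := fun _ z =>
  (LinearMap.comp_apply ..).symm.trans <| LinearMap.congr_fun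
    ((LinearMap.lTensor_comp_rTensor ..).trans (LinearMap.rTensor_comp_lTensor ..).symm) z

lemma mem_tensor_iff {ℳ : ℤ → AddSubgroup N} (hℳ : ∀ ν m, m ∈ ℳ ν ↔ G.proj ν m = m) (ν : ℤ)
    (z : N ⊗[R] L) :
    z ∈ AddSubgroup.closure {z : N ⊗[R] L | ∃ m ∈ ℳ ν, ∃ c, z = m ⊗ₜ[R] c} ↔
      (G.tensor L).proj ν z = z := by
  constructor
  · intro hz
    induction hz using AddSubgroup.closure_induction with
    | mem z hz =>
      obtain ⟨m, hm, c, rfl⟩ := hz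
      exact congrArg (· ⊗ₜ c) ((hℳ ν m).1 hm)
    | zero => exact map_zero _
    | add a b _ _ ha hb => rw [map_add, ha, hb]
    | neg a _ ha => rw [map_neg, ha]
  · intro hz
    rw [← hz]
    clear hz
    induction z with
    | zero => simp
    | add a b ha hb =>
      rw [map_add]
      exact add_mem ha hb
    | tmul a b =>
      exact AddSubgroup.subset_closure ⟨G.proj ν a, (hℳ ν _).2 (G.proj_self ν a), b, rfl⟩

end Tensor

end GradedProjections

section Decomposition

open MvPolynomial DirectSum

variable {R : Type} [CommRing R] {n : ℕ} {w : Fin n → ℤ} {M : Type} [AddCommGroup M]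
  [Module (MvPolynomial (Fin n) R) M] (ℳ : ℤ → AddSubgroup M) [Decomposition ℳ]
  [SetLike.GradedSMul (weightedHomogeneousSubmodule R w) ℳ]

lemma coe_decompose_smul_add {i : ℤ} (j : ℤ) {a : MvPolynomial (Fin n) R}
    (ha : a ∈ weightedHomogeneousSubmodule R w i) (m : M) :
    (decompose ℳ (a • m) (j + i) : M) = a • (decompose ℳ m j : M) := by
  induction m using Decomposition.inductionOn ℳ with
  | zero => simp
  | @homogeneous k m =>
    have hm : a • (m : M) ∈ ℳ (i + k) := SetLike.GradedSMul.smul_mem ha m.2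
    obtain rfl | hk := eq_or_ne k j
    · rw [add_comm] at hm
      rw [decompose_of_mem_same ℳ hm, decompose_of_mem_same ℳ m.2]
    · rw [decompose_of_mem_ne ℳ hm (by omega), decompose_of_mem_ne ℳ m.2 hk, smul_zero]
  | add a b ha hb =>
    rw [smul_add, decompose_add, decompose_add, DirectSum.add_apply, DirectSum.add_apply,
      AddSubgroup.coe_add, AddSubgroup.coe_add, ha, hb, smul_add]

variable [Module R M] [IsScalarTower R (MvPolynomial (Fin n) R) M]

variable (R w) in
/-- The grading of a module over a weighted polynomial ring given by a decomposition. -/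
def GradedProjections.ofDecomposition :
    GradedProjections R (fun j : Fin n => (X j : MvPolynomial (Fin n) R)) w M where
  proj ν :=
    { toFun := fun m => (decompose ℳ m ν : M)
      map_add' := fun a b => by simp
      map_smul' := fun r m => by
        have h := coe_decompose_smul_add ℳ ν (isWeightedHomogeneous_C w r) m
        rwa [add_zero, ← algebraMap_eq, algebraMap_smul, algebraMap_smul] at h }
  proj_smul j ν m := coe_decompose_smul_add ℳ ν (isWeightedHomogeneous_X R w j) m
  proj_self ν m := decompose_of_mem_same ℳ (decompose ℳ m ν).2
  proj_of_ne ν ν' m h := decompose_of_mem_ne ℳ (decompose ℳ m ν').2 h.symm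
  exists_sum_proj m := by
    classical
    refine ⟨(decompose ℳ m).support, fun t ht => ?_⟩
    refine (Finset.sum_subset ht fun ν _ hν => ?_).symm.trans (sum_support_decompose ℳ m)
    rw [DFinsupp.notMem_support_iff] at hν
    exact congrArg Subtype.val hν

lemma GradedProjections.mem_iff_ofDecomposition_proj_eq (ν : ℤ) (m : M) :
    m ∈ ℳ ν ↔ (ofDecomposition R w ℳ).proj ν m = m :=
  ⟨decompose_of_mem_same ℳ, fun h => h ▸ (decompose ℳ m ν).2⟩

end Decomposition

end Gradings

noncomputable section Functoriality

variable {R : Type} [CommRing R] {A : Type} [CommRing A] [Algebra R A] {n : ℕ} {x : Fin n → A}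
  {w : Fin n → ℤ}
variable {N : Type} [AddCommGroup N] [Module R N] [Module A N] [IsScalarTower R A N]
variable {N' : Type} [AddCommGroup N'] [Module R N'] [Module A N'] [IsScalarTower R A N']

variable (R x) in
/-- Functoriality of the cochains modulo coboundaries. -/
def cechQuotMap (i : ℕ) (f : N →ₗ[A] N') :
    (cechC A x N i ⧸ cechBoundaries x N i) →ₗ[R] cechC A x N' i ⧸ cechBoundaries x N' i :=
  ((cechBoundaries x N i).mapQ (cechBoundaries x N' i) (cechCMap x i f)
    fun _ => cechCMap_mem_cechBoundaries x f).restrictScalars R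

namespace GradedProjections

variable {G : GradedProjections R x w N} {G' : GradedProjections R x w N'}

lemma IsGradedHom.cechQuotMap_cohomologyClass {f : N →ₗ[A] N'} (hf : G.IsGradedHom G' f) (i : ℕ)
    (μ : ℤ) (c : cechC A x N i) :
    cechQuotMap R x i f (G.cohomologyClass i μ c) = G'.cohomologyClass i μ (cechCMap x i f c) :=
  congrArg (cechBoundaries x N' i).mkQ (hf.cechCMap_projC μ i c)

variable (G)

lemma cohomologyClass_projC (i : ℕ) (μ : ℤ) (c : cechC A x N i) :
    G.cohomologyClass i μ (G.projC μ i c) = G.cohomologyClass i μ c :=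
  congrArg (cechBoundaries x N i).mkQ (G.projC_projC μ i c)

lemma cohomologyClass_of_mem_cechBoundaries {i : ℕ} (μ : ℤ) {c : cechC A x N i}
    (hc : c ∈ cechBoundaries x N i) : G.cohomologyClass i μ c = 0 :=
  (G.cohomologyClass_eq_zero_iff i μ c).2 (G.projC_mem_cechBoundaries μ hc)

end GradedProjections

end Functoriality

noncomputable section Chase

variable {A : Type} [CommRing A] {n : ℕ} {x : Fin n → A}

section Homology

variable {X Y Z : Type} [AddCommGroup X] [Module A X] [AddCommGroup Y] [Module A Y]
  [AddCommGroup Z] [Module A Z] (f : X →ₗ[A] Y) (g : Y →ₗ[A] Z)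

/-- The homology `ker g / im f` at the middle term of a complex `X → Y → Z`. -/
abbrev middleHomology : Type :=
  LinearMap.ker g ⧸ (LinearMap.range f).comap (LinearMap.ker g).subtype

variable {f g} {p : ℕ}

lemma exists_eq_cechCMap_add_of_lcVanish (hgf : g ∘ₗ f = 0)
    (hH : lcVanish A x (middleHomology f g) p) {y : cechC A x Y p} (hy : cechCMap x p g y = 0)
    (hD : cechD A x Y p y = 0) :
    ∃ b ∈ cechBoundaries x (LinearMap.ker g) p, ∃ u,
      y = cechCMap x p (LinearMap.ker g).subtype b + cechCMap x p f u := by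
  let f' : X →ₗ[A] LinearMap.ker g := f.codRestrict _ (LinearMap.congr_fun hgf)
  let π := ((LinearMap.range f).comap (LinearMap.ker g).subtype).mkQ
  have hfπ : Function.Exact f' π := by
    intro k
    rw [← LinearMap.mem_ker, Submodule.ker_mkQ]
    exact ⟨fun ⟨u, hu⟩ => ⟨u, Subtype.ext hu⟩, fun ⟨u, hu⟩ => ⟨u, congrArg Subtype.val hu⟩⟩
  obtain ⟨k, rfl⟩ := (cechCMap_exact x g.exact_subtype_ker_map p y).1 hy
  have hDk : cechD A x (LinearMap.ker g) p k = 0 := by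
    apply cechCMap_injective x (LinearMap.ker g).injective_subtype
    rw [← cechD_cechCMap, hD, map_zero]
  have hπk : cechCMap x p π k ∈ cechBoundaries x (middleHomology f g) p :=
    (lcVanish_iff x p).1 hH _ (by rw [cechD_cechCMap, hDk, map_zero])
  obtain ⟨b, hb, u, hu⟩ := exists_eq_add_cechCMap x hfπ (Submodule.mkQ_surjective _) hπk
  refine ⟨b, hb, u, ?_⟩
  rw [hu, map_add, cechCMap_cechCMap]
  rfl

lemma exists_cechCMap_eq_and_cechD_eq (hgf : g ∘ₗ f = 0)
    (hH : lcVanish A x (middleHomology f g) (p + 1)) {u : cechC A x Y p}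
    (hu : cechCMap x (p + 1) g (cechD A x Y p u) = 0) :
    ∃ u' w, cechCMap x p g u' = cechCMap x p g u ∧ cechD A x Y p u' = cechCMap x (p + 1) f w := by
  obtain ⟨_, ⟨v, rfl⟩, w, h⟩ := exists_eq_cechCMap_add_of_lcVanish hgf hH hu (cechD_cechD x p u)
  refine ⟨u - cechCMap x p (LinearMap.ker g).subtype v, w, ?_, ?_⟩
  · rw [map_sub, cechCMap_cechCMap, g.comp_ker_subtype, map_zero, LinearMap.zero_apply, sub_zero]
  · rw [map_sub, cechD_cechCMap, h, cechDprev, add_sub_cancel_left]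

end Homology

variable {R : Type} [CommRing R] [Algebra R A] {w : Fin n → ℤ}
variable {X : ℕ → Type} [∀ q, AddCommGroup (X q)] [∀ q, Module R (X q)] [∀ q, Module A (X q)]
  [∀ q, IsScalarTower R A (X q)] {G : ∀ q, GradedProjections R x w (X q)}
  {d : ∀ q, X (q + 1) →ₗ[A] X q}

variable (G d) in
/-- In degree `μ`, every `i`-cochain of `X q` which is a cocycle modulo the image of `d q` is a
coboundary modulo the image of `d q`. -/
def VanishesModImage (μ : ℤ) (i q : ℕ) : Prop :=
  ∀ c u, cechD A x (X q) i c = cechCMap x (i + 1) (d q) u →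
    ∃ b ∈ cechBoundaries x (X q) i, ∃ a, (G q).projC μ i c = b + cechCMap x i (d q) a

variable (hd : ∀ q, d q ∘ₗ d (q + 1) = 0) (hG : ∀ q, (G (q + 1)).IsGradedHom (G q) (d q))
include hd hG

lemma exists_cechD_projC_sub_eq_zero {μ : ℤ} {i q : ℕ}
    (hC : VanishesModImage G d μ (i + 1) (q + 1))
    (hT : lcVanish A x (middleHomology (d (q + 1)) (d q)) (i + 2)) {c : cechC A x (X q) i}
    {u : cechC A x (X (q + 1)) (i + 1)} (h : cechD A x (X q) i c = cechCMap x (i + 1) (d q) u) :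
    ∃ a, cechD A x (X q) i ((G q).projC μ i c - cechCMap x i (d q) a) = 0 := by
  have hu : cechCMap x (i + 2) (d q) (cechD A x _ (i + 1) u) = 0 := by
    rw [← cechD_cechCMap, ← h, cechD_cechD]
  obtain ⟨u', w, hu', hw⟩ := exists_cechCMap_eq_and_cechD_eq (hd q) hT hu
  obtain ⟨_, ⟨a, rfl⟩, a', ha⟩ := hC u' w hw
  refine ⟨a, ?_⟩
  rw [map_sub, cechD_cechCMap, GradedProjections.cechD_projC, h, ← hu', ← (hG q).cechCMap_projC, ha,
    map_add, cechCMap_cechCMap, hd, map_zero, LinearMap.zero_apply, add_zero, cechDprev, sub_self]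

lemma vanishesModImage {μ : ℤ} (k : ℕ) {i : ℕ} (hi : n < i + k)
    (hX : ∀ j, i ≤ j → ∀ q, (G q).cohomology j μ = ⊥)
    (hT : ∀ j, i + 2 ≤ j → ∀ q, lcVanish A x (middleHomology (d (q + 1)) (d q)) j) (q : ℕ) :
    VanishesModImage G d μ i q := by
  induction k generalizing i q with
  | zero =>
    refine fun c _ _ => ⟨0, zero_mem _, 0, ?_⟩
    rw [cechC_eq_zero_of_lt x hi c, map_zero, map_zero, add_zero]
  | succ k ih =>
    intro c u h
    obtain ⟨a, ha⟩ := exists_cechD_projC_sub_eq_zero hd hG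
      (ih (by omega) (fun j hj => hX j (by omega)) (fun j hj => hT j (by omega)) (q + 1))
      (hT _ le_rfl q) h
    refine ⟨_, (G q).cohomology_eq_bot_iff.1 (hX i le_rfl q) _ ha, (G (q + 1)).projC μ i a, ?_⟩
    rw [map_sub, GradedProjections.projC_projC, (hG q).cechCMap_projC, sub_add_cancel]

variable {Y : Type} [AddCommGroup Y] [Module R Y] [Module A Y] [IsScalarTower R A Y]
  {H : GradedProjections R x w Y} {ε : X 0 →ₗ[A] Y}
  (hdε : Function.Exact (d 0) ε) (hε : Function.Surjective ε) (hεG : (G 0).IsGradedHom H ε)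
include hdε hε hεG

lemma cohomology_eq_bot_of_complex {μ : ℤ} {i : ℕ}
    (hX : ∀ j, i ≤ j → ∀ q, (G q).cohomology j μ = ⊥)
    (hT : ∀ j, i + 2 ≤ j → ∀ q, lcVanish A x (middleHomology (d (q + 1)) (d q)) j) :
    H.cohomology i μ = ⊥ := by
  rw [H.cohomology_eq_bot_iff]
  intro z hz
  obtain ⟨c, rfl⟩ := cechCMap_surjective x hε i z
  rw [cechD_cechCMap] at hz
  obtain ⟨u, hu⟩ := (cechCMap_exact x hdε _ _).1 hz
  obtain ⟨b, hb, a, h⟩ := vanishesModImage hd hG (n + 1) (by omega) hX hT 0 c u hu.symm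
  rw [← hεG.cechCMap_projC, h, map_add, cechCMap_cechCMap, hdε.linearMap_comp_eq_zero, map_zero,
    LinearMap.zero_apply, add_zero]
  exact cechCMap_mem_cechBoundaries x ε hb

lemma exists_cohomologyClass_cechCMap_eq {μ : ℤ} {i : ℕ}
    (hX : ∀ j, i + 1 ≤ j → ∀ q, (G q).cohomology j μ = ⊥)
    (hT : ∀ j, i + 1 ≤ j → ∀ q, lcVanish A x (middleHomology (d (q + 1)) (d q)) j)
    (hY : H.cohomology i μ = ⊥) {z : cechC A x (X 0) i} (hz : cechD A x (X 0) i z = 0) :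
    ∃ z₁, cechD A x (X 1) i z₁ = 0 ∧
      (G 0).cohomologyClass i μ (cechCMap x i (d 0) z₁) = (G 0).cohomologyClass i μ z := by
  have hεz : cechCMap x i ε ((G 0).projC μ i z) ∈ cechBoundaries x Y i := by
    rw [hεG.cechCMap_projC]
    exact H.cohomology_eq_bot_iff.1 hY _ (by rw [cechD_cechCMap, hz, map_zero])
  obtain ⟨b, hb, u, hu⟩ := exists_eq_add_cechCMap x hdε hε hεz
  replace hu : cechCMap x i (d 0) u = (G 0).projC μ i z - b := eq_sub_of_add_eq' hu.symm
  have hDu : cechCMap x (i + 1) (d 0) (cechD A x (X 1) i u) = 0 := by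
    rw [← cechD_cechCMap, hu, map_sub, GradedProjections.cechD_projC, hz,
      cechD_eq_zero_of_mem_cechBoundaries x hb, map_zero, sub_zero]
  obtain ⟨u', v, hu', hv⟩ := exists_cechCMap_eq_and_cechD_eq (hd 0) (hT _ le_rfl 0) hDu
  obtain ⟨a, ha⟩ := exists_cechD_projC_sub_eq_zero hd hG (μ := μ)
    (vanishesModImage hd hG (n + 1) (by omega) hX (fun j hj => hT j (by omega)) 2)
    (hT _ (by omega) 1) hv
  refine ⟨_, ha, ?_⟩
  rw [map_sub, cechCMap_cechCMap, hd, map_zero, LinearMap.zero_apply, sub_zero,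
    (hG 0).cechCMap_projC, hu', hu, GradedProjections.cohomologyClass_projC,
    map_sub, GradedProjections.cohomologyClass_projC,
    (G 0).cohomologyClass_of_mem_cechBoundaries μ hb, sub_zero]

end Chase

noncomputable section FiberComparison

open TensorProduct IsLocalRing

variable {R : Type} [CommRing R] {A : Type} [CommRing A] [Algebra R A]
variable {M : Type} [AddCommGroup M] [Module R M] [Module A M] [IsScalarTower R A M]

lemma lTensor_comp_lTensor_eq_zero {L L' L'' : Type} [AddCommGroup L] [Module R L]
    [AddCommGroup L'] [Module R L'] [AddCommGroup L''] [Module R L''] {f : L →ₗ[R] L'}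
    {g : L' →ₗ[R] L''} (h : g ∘ₗ f = 0) :
    AlgebraTensorModule.lTensor A M g ∘ₗ AlgebraTensorModule.lTensor A M f = 0 := by
  rw [← AlgebraTensorModule.lTensor_comp, h, map_zero]

section Contraction

variable {L : Type} [AddCommGroup L] [Module R L] (φ : L →ₗ[R] R)

variable (A M) in
/-- The contraction `m ⊗ l ↦ φ l • m` of `M ⊗[R] L` against a linear form `φ` on `L`. -/
def contraction : M ⊗[R] L →ₗ[A] M :=
  (AlgebraTensorModule.rid R A M).toLinearMap ∘ₗ AlgebraTensorModule.lTensor A M φ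

@[simp] lemma contraction_tmul (m : M) (l : L) : contraction A M φ (m ⊗ₜ l) = φ l • m :=
  AlgebraTensorModule.rid_tmul (A := A) (φ l) m

lemma contraction_comp_tmulRightS (l : L) :
    contraction A M φ ∘ₗ tmulRightS R A M L l = φ l • LinearMap.id :=
  LinearMap.ext fun m => contraction_tmul φ m l

lemma contraction_comp_lTensor {L' : Type} [AddCommGroup L'] [Module R L'] (f : L' →ₗ[R] L) :
    contraction A M φ ∘ₗ AlgebraTensorModule.lTensor A M f = contraction A M (φ ∘ₗ f) := by
  ext
  simp

variable {ι : Type} [Fintype ι] (b : Module.Basis ι R L)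

lemma contraction_eq_sum_coord :
    contraction A M φ = ∑ j, φ (b j) • contraction A M (b.coord j) := by
  refine AlgebraTensorModule.ext fun m l => ?_
  conv_lhs => rw [contraction_tmul, ← b.sum_repr l, map_sum, Finset.sum_smul]
  simp [mul_smul, smul_comm (φ _)]

lemma sum_tmulRightS_comp_contraction_coord :
    ∑ j, tmulRightS R A M L (b j) ∘ₗ contraction A M (b.coord j) = LinearMap.id := by
  refine AlgebraTensorModule.ext fun m l => ?_
  conv_rhs => rw [← b.sum_repr l, LinearMap.id_apply, tmul_sum]
  rw [LinearMap.sum_apply]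
  refine Finset.sum_congr rfl fun j _ => ?_
  rw [LinearMap.comp_apply, contraction_tmul, b.coord_apply, ← smul_tmul]
  rfl

end Contraction

namespace GradedProjections

variable {n : ℕ} {x : Fin n → A} {w : Fin n → ℤ} (G : GradedProjections R x w M)

section Tensor

variable {L : Type} [AddCommGroup L] [Module R L]

lemma isGradedHom_tmulRightS (l : L) : G.IsGradedHom (G.tensor L) (tmulRightS R A M L l) :=
  fun _ _ => rfl

lemma isGradedHom_contraction (φ : L →ₗ[R] R) :
    (G.tensor L).IsGradedHom G (contraction A M φ) := by
  intro ν z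
  induction z with
  | zero => simp
  | add a b ha hb => simp only [map_add, ha, hb]
  | tmul m l =>
    rw [contraction_tmul, map_smul]
    exact contraction_tmul φ _ l

lemma cohomology_tensor_eq_bot [Module.Free R L] [Module.Finite R L] {i : ℕ} {μ : ℤ}
    (h : G.cohomology i μ = ⊥) : (G.tensor L).cohomology i μ = ⊥ := by
  let b := Module.Free.chooseBasis R L
  rw [cohomology_eq_bot_iff] at h ⊢
  intro z hz
  rw [← cechCMap_id x i z, ← sum_tmulRightS_comp_contraction_coord b, map_sum, LinearMap.sum_apply,
    map_sum]
  refine sum_mem fun j _ => ?_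
  rw [← cechCMap_cechCMap, ← (G.isGradedHom_tmulRightS _).cechCMap_projC]
  exact cechCMap_mem_cechBoundaries x _ (h _ (by rw [cechD_cechCMap, hz, map_zero]))

lemma cohomologyClass_contraction_mem_smul [Module.Free R L] [Module.Finite R L] {I : Ideal R}
    {φ : L →ₗ[R] R} (hφ : ∀ l, φ l ∈ I) {i : ℕ} (μ : ℤ) {z : cechC A x (M ⊗[R] L) i}
    (hz : cechD A x (M ⊗[R] L) i z = 0) :
    G.cohomologyClass i μ (cechCMap x i (contraction A M φ) z) ∈ I • G.cohomology i μ := by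
  let b := Module.Free.chooseBasis R L
  rw [contraction_eq_sum_coord φ b, map_sum, LinearMap.sum_apply, map_sum]
  refine sum_mem fun j _ => ?_
  rw [LinearMap.map_smul_of_tower, LinearMap.smul_apply, map_smul]
  exact Submodule.smul_mem_smul (hφ _)
    (G.cohomologyClass_mem_cohomology μ (by rw [cechD_cechCMap, hz, map_zero]))

end Tensor

variable {F : ℕ → Type} [∀ q, AddCommGroup (F q)] [∀ q, Module R (F q)]
  {dF : ∀ q, F (q + 1) →ₗ[R] F q} (hd : ∀ q, Function.Exact (dF (q + 1)) (dF q)) {i : ℕ} {μ : ℤ}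
include hd

variable [∀ q, Module.Free R (F q)] [∀ q, Module.Finite R (F q)]

theorem cohomology_tensor_eq_bot_of_resolution {L : Type} [AddCommGroup L] [Module R L]
    {ε : F 0 →ₗ[R] L} (hdε : Function.Exact (dF 0) ε) (hε : Function.Surjective ε)
    (hT : ∀ j, i + 2 ≤ j → ∀ q, lcVanish A x (torMod R A M F dF (q + 1)) j)
    (hM : ∀ j, i ≤ j → G.cohomology j μ = ⊥) : (G.tensor L).cohomology i μ = ⊥ :=
  cohomology_eq_bot_of_complex (X := fun q => M ⊗[R] F q) (G := fun q => G.tensor (F q))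
    (d := fun q => AlgebraTensorModule.lTensor A M (dF q)) (ε := AlgebraTensorModule.lTensor A M ε)
    (fun q => lTensor_comp_lTensor_eq_zero (hd q).linearMap_comp_eq_zero)
    (fun q => G.isGradedHom_lTensor (dF q))
    (lTensor_exact M hdε hε) (LinearMap.lTensor_surjective M hε) (G.isGradedHom_lTensor ε)
    (fun j hj _ => G.cohomology_tensor_eq_bot (hM j hj)) hT

theorem cohomology_eq_bot_of_tensor_residue [IsLocalRing R] {ε : F 0 →ₗ[R] R ⧸ maximalIdeal R}
    (hdε : Function.Exact (dF 0) ε) (hε : Function.Surjective ε)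
    (hT : ∀ j, i + 1 ≤ j → ∀ q, lcVanish A x (torMod R A M F dF (q + 1)) j)
    (hM : ∀ j, i + 1 ≤ j → G.cohomology j μ = ⊥) (hfg : (G.cohomology i μ).FG)
    (hres : (G.tensor (R ⧸ maximalIdeal R)).cohomology i μ = ⊥) : G.cohomology i μ = ⊥ := by
  obtain ⟨g, hg⟩ := hε 1
  obtain ⟨φ, hφ⟩ :=
    Module.projective_lifting_property (maximalIdeal R).mkQ ε (Submodule.mkQ_surjective _)
  have hφg : IsUnit (φ g) := by
    rw [← notMem_maximalIdeal, ← Ideal.Quotient.eq_zero_iff_mem]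
    exact (LinearMap.congr_fun hφ g).trans hg ▸ one_ne_zero
  have hφd : ∀ y, (φ ∘ₗ dF 0) y ∈ maximalIdeal R := fun y => by
    rw [← Ideal.Quotient.eq_zero_iff_mem]
    exact (LinearMap.congr_fun hφ _).trans (hdε.apply_apply_eq_zero y)
  refine Submodule.eq_bot_of_le_smul_of_le_jacobson_bot (maximalIdeal R) _ hfg ?_
    (maximalIdeal_le_jacobson _)
  rintro _ ⟨z, hz : cechD A x M i z = 0, rfl⟩
  obtain ⟨z₁, hz₁, h⟩ := exists_cohomologyClass_cechCMap_eq
    (X := fun q => M ⊗[R] F q) (G := fun q => G.tensor (F q))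
    (d := fun q => AlgebraTensorModule.lTensor A M (dF q)) (ε := AlgebraTensorModule.lTensor A M ε)
    (fun q => lTensor_comp_lTensor_eq_zero (hd q).linearMap_comp_eq_zero)
    (fun q => G.isGradedHom_lTensor (dF q))
    (lTensor_exact M hdε hε) (LinearMap.lTensor_surjective M hε) (G.isGradedHom_lTensor ε)
    (fun j hj _ => G.cohomology_tensor_eq_bot (hM j hj)) hT hres
    (z := cechCMap x i (tmulRightS R A M (F 0) g) z) (by rw [cechD_cechCMap, hz, map_zero])
  have h' := congrArg (cechQuotMap R x i (contraction A M φ)) h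
  rw [(G.isGradedHom_contraction φ).cechQuotMap_cohomologyClass,
    (G.isGradedHom_contraction φ).cechQuotMap_cohomologyClass, cechCMap_cechCMap,
    cechCMap_cechCMap, contraction_comp_lTensor, contraction_comp_tmulRightS,
    LinearMap.map_smul_of_tower, LinearMap.smul_apply, cechCMap_id, map_smul] at h'
  rw [← Submodule.smul_mem_iff_of_isUnit _ hφg, ← h']
  exact G.cohomologyClass_contraction_mem_smul hφd μ hz₁

end GradedProjections

end FiberComparison

noncomputable section MonomialDivision
open MvPolynomial

variable {R σ : Type} [CommRing R]

/-- Division by the power `X j ^ a`, discarding the monomials which `X j ^ a` does not divide. -/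
def divXPow (j : σ) (a : ℕ) : MvPolynomial σ R →ₗ[R] MvPolynomial σ R where
  toFun m := m.divMonomial (Finsupp.single j a)
  map_add' m m' := add_divMonomial m m' _
  map_smul' r m := by
    ext d
    simp [coeff_divMonomial]

lemma coeff_divXPow (j : σ) (a : ℕ) (m : MvPolynomial σ R) (d : σ →₀ ℕ) :
    coeff d (divXPow j a m) = coeff (Finsupp.single j a + d) m :=
  coeff_divMonomial _ _ _

@[simp] lemma divXPow_zero (j : σ) (m : MvPolynomial σ R) : divXPow j 0 m = m := by
  simp [divXPow, divMonomial_zero]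

lemma divXPow_add_X_pow_mul (j : σ) (a b : ℕ) (m : MvPolynomial σ R) :
    divXPow j (a + b) (X j ^ b * m) = divXPow j a m := by
  simp only [divXPow, LinearMap.coe_mk, AddHom.coe_mk]
  rw [add_comm, Finsupp.single_add, divMonomial_add, X_pow_eq_monomial, divMonomial_monomial_mul]

lemma divXPow_X_pow_mul_of_ne {j l : σ} (hl : l ≠ j) (a b : ℕ) (m : MvPolynomial σ R) :
    divXPow j a (X l ^ b * m) = X l ^ b * divXPow j a m := by
  classical
  ext d
  have hle : Finsupp.single l b ≤ Finsupp.single j a + d ↔ Finsupp.single l b ≤ d := by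
    simp [Finsupp.single_le_iff, hl.symm]
  rw [X_pow_eq_monomial, coeff_divXPow, coeff_monomial_mul', coeff_monomial_mul', coeff_divXPow]
  by_cases hd : Finsupp.single l b ≤ d
  · rw [if_pos hd, if_pos (hle.2 hd), add_tsub_assoc_of_le hd]
  · rw [if_neg hd, if_neg (mt hle.1 hd)]

lemma divXPow_prod_X_pow_mul_of_notMem {j : σ} {T : Finset σ} (hj : j ∉ T) (a b : ℕ)
    (m : MvPolynomial σ R) :
    divXPow j a ((∏ i ∈ T, X i) ^ b * m) = (∏ i ∈ T, X i) ^ b * divXPow j a m := by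
  rw [← Finset.prod_pow]
  induction T using Finset.cons_induction with
  | empty => simp
  | cons l T hl ih =>
    simp only [Finset.mem_cons, not_or] at hj
    rw [Finset.prod_cons, mul_assoc, divXPow_X_pow_mul_of_ne (Ne.symm hj.1), ih hj.2, mul_assoc]

lemma divXPow_prod_X_pow_mul [DecidableEq σ] (j : σ) (T : Finset σ) (a b : ℕ)
    (m : MvPolynomial σ R) :
    divXPow j (a + if j ∈ T then b else 0) ((∏ i ∈ T, X i) ^ b * m) =
      (∏ i ∈ T.erase j, X i) ^ b * divXPow j a m := by
  by_cases hj : j ∈ T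
  · rw [if_pos hj, ← Finset.mul_prod_erase T _ hj, mul_pow, mul_assoc, divXPow_add_X_pow_mul,
      divXPow_prod_X_pow_mul_of_notMem (Finset.notMem_erase j T)]
  · rw [if_neg hj, add_zero, divXPow_prod_X_pow_mul_of_notMem hj, Finset.erase_eq_of_notMem hj]

end MonomialDivision

noncomputable section PolynomialCech
open MvPolynomial

variable {R : Type} [CommRing R] {n : ℕ}

local notation "S" => MvPolynomial (Fin n) R
local notation "𝐗" => fun i : Fin n => (X i : MvPolynomial (Fin n) R)

/-- The projection of the Čech localizations of a polynomial ring which discards all the monomials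
having a pole along `X j`. As the remaining ones live where `X j` is not inverted, it maps the
localization at `U` to the localization at any `T` containing `U.erase j`. -/
def dropPole (j : Fin n) {U T : Finset (Fin n)} (h : U.erase j ⊆ T) :
    cechL S 𝐗 S U →ₗ[R] cechL S 𝐗 S T :=
  cechLift 𝐗 U (fun k => (cechMap S 𝐗 S (U.erase j) T h).restrictScalars R ∘ₗ
      cechFracHom 𝐗 (U.erase j) R k ∘ₗ divXPow j (if j ∈ U then k else 0)) (by
    intro k l m
    simp only [LinearMap.comp_apply, cechFracHom, LinearMap.coe_mk, AddHom.coe_mk]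
    have hkl : (if j ∈ U then k + l else 0) =
        (if j ∈ U then k else 0) + if j ∈ U then l else 0 := by split_ifs <;> rfl
    rw [hkl, smul_eq_mul, divXPow_prod_X_pow_mul, ← smul_eq_mul (a := _ ^ l),
      ← cechFrac_eq_cechFrac_add])

lemma dropPole_cechFrac (j : Fin n) {U T : Finset (Fin n)} (h : U.erase j ⊆ T) (k : ℕ) (m : S) :
    dropPole j h (cechFrac 𝐗 U k m) = cechMap S 𝐗 S (U.erase j) T h
      (cechFrac 𝐗 (U.erase j) k (divXPow j (if j ∈ U then k else 0) m)) :=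
  cechLift_cechFrac 𝐗 U _ _ k m

lemma dropPole_cechMap (j : Fin n) {U U' T : Finset (Fin n)} (hU : U ⊆ U') (h : U'.erase j ⊆ T)
    (c : cechL S 𝐗 S U) : dropPole j h (cechMap S 𝐗 S U U' hU c) =
      dropPole j ((Finset.erase_subset_erase j hU).trans h) c := by
  obtain ⟨k, m, rfl⟩ := exists_eq_cechFrac 𝐗 U c
  have hk : (if j ∈ U' then k else 0) =
      (if j ∈ U then k else 0) + if j ∈ U' \ U then k else 0 := by
    by_cases hj : j ∈ U
    · simp [hj, hU hj]
    · simp [hj]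
  rw [cechMap_cechFrac, dropPole_cechFrac, dropPole_cechFrac,
    ← cechMap_cechMap 𝐗 (Finset.erase_subset_erase j hU) h, hk, smul_eq_mul,
    divXPow_prod_X_pow_mul, cechMap_cechFrac _ _ (U.erase j), smul_eq_mul]
  congr 5
  grind

lemma cechMap_dropPole (j : Fin n) {U T T' : Finset (Fin n)} (h : U.erase j ⊆ T) (hT : T ⊆ T')
    (c : cechL S 𝐗 S U) :
    cechMap S 𝐗 S T T' hT (dropPole j h c) = dropPole j (h.trans hT) c := by
  obtain ⟨k, m, rfl⟩ := exists_eq_cechFrac 𝐗 U c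
  rw [dropPole_cechFrac, dropPole_cechFrac, cechMap_cechMap]

lemma dropPole_of_notMem {j : Fin n} {T : Finset (Fin n)} (hj : j ∉ T) (c : cechL S 𝐗 S T) :
    dropPole j (Finset.erase_subset j T) c = c := by
  obtain ⟨k, m, rfl⟩ := exists_eq_cechFrac 𝐗 T c
  rw [dropPole_cechFrac, if_neg hj, divXPow_zero, cechMap_cechFrac, Finset.erase_eq_of_notMem hj]
  simp

/-- The contracting homotopy showing that `dropPole j` is zero on cohomology. -/
def poleHomotopy (j : Fin n) (z : cechTotal S 𝐗 S) : cechTotal S 𝐗 S := fun T =>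
  if j ∈ T then 0 else
    cechSign S (insert j T) j • dropPole j (Finset.erase_insert_subset j T) (z (insert j T))

lemma poleHomotopy_of_mem {j : Fin n} {T : Finset (Fin n)} (hj : j ∈ T) (z : cechTotal S 𝐗 S) :
    poleHomotopy j z T = 0 := if_pos hj

lemma poleHomotopy_of_notMem {j : Fin n} {T U : Finset (Fin n)} (hj : j ∉ T) (hU : U = insert j T)
    (h : U.erase j ⊆ T) (z : cechTotal S 𝐗 S) :
    poleHomotopy j z T = cechSign S U j • dropPole j h (z U) := by
  subst hU
  exact if_neg hj

lemma cechTotalD_poleHomotopy_add (j : Fin n) (z : cechTotal S 𝐗 S) (T : Finset (Fin n)) :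
    cechTotalD 𝐗 (poleHomotopy j z) T + poleHomotopy j (cechTotalD 𝐗 z) T =
      dropPole j (Finset.erase_subset j T) (z T) := by
  by_cases hj : j ∈ T
  · rw [poleHomotopy_of_mem hj, add_zero, cechTotalD, Finset.sum_eq_single_of_mem j hj]
    · rw [poleHomotopy_of_notMem (Finset.notMem_erase j T) (Finset.insert_erase hj).symm subset_rfl,
        map_smul, smul_smul, cechSign_mul_self, one_smul, cechMap_dropPole]
    · intro l _ hl
      rw [poleHomotopy_of_mem (by simp [hj, hl.symm]), map_zero, smul_zero]
  · have hl : ∀ l ∈ T, cechSign S T l • cechMap S 𝐗 S (T.erase l) T (Finset.erase_subset _ _)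
        (poleHomotopy j z (T.erase l)) = -(cechSign S (insert j T) j • cechSign S (insert j T) l •
          dropPole j (by grind) (z ((insert j T).erase l))) := by
      intro l hl
      have hjl : j ≠ l := by rintro rfl; exact hj hl
      rw [poleHomotopy_of_notMem (U := (insert j T).erase l) (by simp [hj])
        (Finset.erase_insert_of_ne hjl) (by grind), map_smul, smul_smul, cechMap_dropPole,
        cechSign_mul_cechSign_insert hj hl, smul_smul, neg_smul]
    rw [cechTotalD, Finset.sum_congr rfl hl, Finset.sum_neg_distrib, ← Finset.smul_sum,
      poleHomotopy_of_notMem hj rfl (Finset.erase_insert_subset j T), cechTotalD, map_sum]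
    simp only [map_cechSign_smul, dropPole_cechMap]
    rw [Finset.sum_insert hj, smul_add, smul_smul, cechSign_mul_self, one_smul,
      neg_add_cancel_comm_assoc]
    have hz (U : Finset (Fin n)) (hU : U = T) (h : U.erase j ⊆ T) :
        dropPole j h (z U) = dropPole j (Finset.erase_subset j T) (z T) := by
      subst hU
      rfl
    exact hz _ (Finset.erase_insert hj) _

lemma cechPi_dropPole_mem_cechBoundaries (j : Fin n) {p : ℕ} {z : cechC S 𝐗 S p}
    (hz : cechD S 𝐗 S p z = 0) :
    cechPi (fun T => dropPole j (Finset.erase_subset j T)) p z ∈ cechBoundaries 𝐗 S p := by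
  convert cechRestrict_cechTotalD_mem_cechBoundaries 𝐗 p (poleHomotopy j (cechExtend 𝐗 z)) using 1
  have h0 : cechTotalD 𝐗 (cechExtend 𝐗 z) = 0 := by
    rw [← cechExtend_cechD, hz]
    ext T
    exact dite_eq_right_iff.2 fun _ => rfl
  ext T
  rw [cechPi_apply, ← cechExtend_apply 𝐗 z T, ← cechTotalD_poleHomotopy_add, h0]
  simp [poleHomotopy, cechRestrict]

theorem lcVanish_mvPolynomial_of_lt {p : ℕ} (hp : p < n) : lcVanish S 𝐗 S p := by
  rw [lcVanish_iff]
  intro z hz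
  have key (J : Finset (Fin n)) : ∃ z', z - z' ∈ cechBoundaries 𝐗 S p ∧
      cechD S 𝐗 S p z' = 0 ∧ ∀ T, ¬ J ⊆ T.1 → z' T = 0 := by
    induction J using Finset.induction_on with
    | empty => exact ⟨z, by simp, hz, by simp⟩
    | insert j J _ ih =>
      obtain ⟨z', hzz', hz', hJ⟩ := ih
      have hP := cechPi_dropPole_mem_cechBoundaries j hz'
      refine ⟨z' - cechPi (fun T => dropPole j (Finset.erase_subset j T)) p z', ?_, ?_, ?_⟩
      · rw [← sub_add]
        exact add_mem hzz' hP
      · rw [map_sub, hz', cechD_eq_zero_of_mem_cechBoundaries 𝐗 hP, sub_zero]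
      · intro T hT
        rw [Pi.sub_apply, cechPi_apply]
        by_cases hj : j ∈ T.1
        · rw [hJ T fun h => hT (Finset.insert_subset hj h), map_zero, sub_zero]
        · rw [dropPole_of_notMem hj, sub_self]
  obtain ⟨z', hzz', -, hz'⟩ := key Finset.univ
  have hz'0 : z' = 0 := by
    ext T
    refine hz' T fun h => ?_
    have := Finset.card_le_card h
    rw [T.2, Finset.card_univ, Fintype.card_fin] at this
    omega
  rwa [hz'0, sub_zero] at hzz'

end PolynomialCech

noncomputable section PolynomialGrading
open MvPolynomial

variable {R : Type} [CommRing R] {n : ℕ}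

local notation "S" => MvPolynomial (Fin n) R
local notation "𝐗" => fun i : Fin n => (X i : MvPolynomial (Fin n) R)

/-- The grading of the shift `S(-a)` of a polynomial ring `S` whose variables have degrees `w`. -/
def shiftedGrading (w : Fin n → ℤ) (a : ℤ) : GradedProjections R 𝐗 w S where
  proj ν := weightedHomogeneousComponent w (ν - a)
  proj_smul j ν m := by
    classical
    ext d
    rw [smul_eq_mul, smul_eq_mul, coeff_weightedHomogeneousComponent, coeff_X_mul', coeff_X_mul',
      coeff_weightedHomogeneousComponent]
    by_cases hj : j ∈ d.support
    · have hd : d - Finsupp.single j 1 + Finsupp.single j 1 = d :=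
        tsub_add_cancel_of_le (Finsupp.single_le_iff.2
          (Nat.one_le_iff_ne_zero.2 (Finsupp.mem_support_iff.1 hj)))
      have hw : Finsupp.weight w d = Finsupp.weight w (d - Finsupp.single j 1) + w j := by
        rw [← congrArg (Finsupp.weight w) hd, map_add, Finsupp.weight_single, one_smul]
      rw [if_pos hj, if_pos hj, hw]
      congr 1
      grind
    · simp [hj]
  proj_self ν m :=
    (weightedHomogeneousComponent_isWeightedHomogeneous _ m).weightedHomogeneousComponent_same
  proj_of_ne ν ν' m h :=
    (weightedHomogeneousComponent_isWeightedHomogeneous _ m).weightedHomogeneousComponent_ne _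
      (sub_left_injective.ne h)
  exists_sum_proj m := by
    classical
    refine ⟨m.support.image fun d => Finsupp.weight w d + a, fun t ht => ?_⟩
    ext d
    simp only [coeff_sum, coeff_weightedHomogeneousComponent, eq_sub_iff_add_eq]
    rw [Finset.sum_ite_eq]
    by_cases hd : d ∈ m.support
    · rw [if_pos (ht (Finset.mem_image_of_mem _ hd))]
    · rw [notMem_support_iff.1 hd, ite_self]

lemma shiftedGrading_proj_monomial_of_ne {w : Fin n → ℤ} {a ν : ℤ} {d : Fin n →₀ ℕ}
    (h : Finsupp.weight w d ≠ ν - a) (r : R) :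
    (shiftedGrading w a).proj ν (monomial d r) = 0 :=
  (isWeightedHomogeneous_monomial w d r rfl).weightedHomogeneousComponent_ne _ h.symm

end PolynomialGrading

noncomputable section TopDegree
open MvPolynomial

variable {R : Type} [CommRing R] {n : ℕ}

local notation "S" => MvPolynomial (Fin n) R
local notation "𝐗" => fun i : Fin n => (X i : MvPolynomial (Fin n) R)

/-- The cochain `m / (∏ i, X i) ^ k` in the last term of the Čech complex of a polynomial ring. -/
def topFrac (k : ℕ) : S →ₗ[R] cechC S 𝐗 S n := LinearMap.pi fun T => cechFracHom 𝐗 T.1 R k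

lemma topFrac_apply (k : ℕ) (m : S) (T : {T : Finset (Fin n) // T.card = n}) :
    topFrac k m T = cechFrac 𝐗 T.1 k m := rfl

lemma eq_univ_of_card_eq (T : {T : Finset (Fin n) // T.card = n}) : T.1 = Finset.univ := by
  rw [← Finset.card_eq_iff_eq_univ, T.2, Fintype.card_fin]

lemma exists_eq_topFrac (z : cechC S 𝐗 S n) : ∃ k m, z = topFrac k m := by
  obtain ⟨k, m, h⟩ := exists_eq_cechFrac 𝐗 Finset.univ (z ⟨Finset.univ, by simp⟩)
  refine ⟨k, m, ?_⟩
  ext ⟨T, hT⟩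
  obtain rfl : T = Finset.univ := eq_univ_of_card_eq ⟨T, hT⟩
  rw [h, topFrac_apply]

lemma topFrac_X_pow_mul_mem_cechBoundaries (k : ℕ) (j : Fin n) (m : S) :
    topFrac k (X j ^ k * m) ∈ cechBoundaries 𝐗 S n := by
  have h := cechPi_dropPole_mem_cechBoundaries j (z := topFrac k (X j ^ k * m))
    (cechC_eq_zero_of_lt _ n.lt_succ_self _)
  convert h using 1
  ext T
  have hj : j ∈ T.1 := eq_univ_of_card_eq T ▸ Finset.mem_univ j
  have hdiv := divXPow_add_X_pow_mul j 0 k m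
  rw [zero_add, divXPow_zero] at hdiv
  rw [cechPi_apply, topFrac_apply, dropPole_cechFrac, if_pos hj, hdiv, cechMap_cechFrac,
    Finset.sdiff_erase_self hj, Finset.prod_singleton, smul_eq_mul]

lemma topFrac_monomial_eq {k l : ℕ} {d e : Fin n →₀ ℕ} (h : ∀ j, d j + l = e j + k) (r : R) :
    topFrac k (monomial d r) = topFrac l (monomial e r) := by
  have hX (b : ℕ) : (∏ i, 𝐗 i) ^ b = monomial (Finsupp.equivFunOnFinite.symm fun _ => b) 1 := by
    rw [monic_monomial_eq, Finsupp.prod_fintype _ _ fun _ => pow_zero _, ← Finset.prod_pow]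
    rfl
  ext T
  rw [topFrac_apply, topFrac_apply, cechFrac_eq_iff]
  refine ⟨0, ?_⟩
  rw [eq_univ_of_card_eq T, hX, hX, smul_eq_mul, smul_eq_mul, monomial_mul, monomial_mul]
  congr 2
  ext j
  simpa [add_comm] using h j

lemma projC_topFrac {w : Fin n → ℤ} (G : GradedProjections R 𝐗 w S) (μ : ℤ) (k : ℕ) (m : S) :
    G.projC μ n (topFrac k m) = topFrac k (G.proj (μ + k * ∑ i, w i) m) := by
  ext T
  rw [GradedProjections.projC_apply, topFrac_apply, topFrac_apply,
    GradedProjections.projL_cechFrac, eq_univ_of_card_eq T]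

lemma le_add_natAbs_of_weight_eq {w : Fin n → ℤ} (hw : ∀ i, 0 < w i) {ν : ℤ} {k : ℕ}
    {d : Fin n →₀ ℕ} (hd : Finsupp.weight w d = ν + k * ∑ i, w i) (hk : ∀ j, d j ≤ k) (j : Fin n) :
    k ≤ d j + ν.natAbs := by
  have hsum : ∑ i, ((k : ℤ) - d i) * w i = -ν := by
    rw [Finsupp.weight_eq_sum] at hd
    simp only [nsmul_eq_mul] at hd
    simp only [sub_mul, Finset.sum_sub_distrib, ← Finset.mul_sum]
    linarith
  have hnonneg (i : Fin n) : 0 ≤ (k : ℤ) - d i := by have := hk i; omega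
  have hle : (k : ℤ) - d j ≤ -ν := by
    calc (k : ℤ) - d j ≤ (k - d j) * w j := le_mul_of_one_le_right (hnonneg j) (hw j)
      _ ≤ ∑ i, ((k : ℤ) - d i) * w i := Finset.single_le_sum
        (f := fun i => ((k : ℤ) - d i) * w i)
        (fun i _ => mul_nonneg (hnonneg i) (hw i).le) (Finset.mem_univ j)
      _ = -ν := hsum
  omega

/-- The classes of the monomials `∏ i, X i ^ (e i - B)` with `0 ≤ e i ≤ B`. -/
def topClasses (w : Fin n → ℤ) (a μ : ℤ) (B : ℕ) : Set (cechC S 𝐗 S n ⧸ cechBoundaries 𝐗 S n) :=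
  (fun e => (shiftedGrading w a).cohomologyClass n μ (topFrac B (monomial e 1))) ''
    Set.Iic (Finsupp.equivFunOnFinite.symm fun _ => B)

lemma cohomologyClass_topFrac_monomial_mem_span {w : Fin n → ℤ} (hw : ∀ i, 0 < w i) (a μ : ℤ)
    (k : ℕ) (d : Fin n →₀ ℕ) :
    (shiftedGrading w a).cohomologyClass n μ (topFrac k (monomial d (1 : R))) ∈
      Submodule.span R (topClasses w a μ (μ - a).natAbs) := by
  by_cases hd : Finsupp.weight w d = μ + k * ∑ i, w i - a
  swap
  · rw [(GradedProjections.cohomologyClass_eq_zero_iff ..).2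
      (by rw [projC_topFrac, shiftedGrading_proj_monomial_of_ne hd, map_zero]; exact zero_mem _)]
    exact zero_mem _
  by_cases hk : ∃ j, k ≤ d j
  · obtain ⟨j, hj⟩ := hk
    have hdj : monomial d (1 : R) = X j ^ k * monomial (d - Finsupp.single j k) 1 := by
      rw [X_pow_eq_monomial, monomial_mul, one_mul,
        add_tsub_cancel_of_le (Finsupp.single_le_iff.2 hj)]
    rw [hdj, GradedProjections.cohomologyClass_of_mem_cechBoundaries _ _
      (topFrac_X_pow_mul_mem_cechBoundaries k j _)]
    exact zero_mem _
  · push Not at hk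
    have hB := le_add_natAbs_of_weight_eq hw (ν := μ - a) (by rw [hd]; ring) fun j => (hk j).le
    have hshift (j : Fin n) := Nat.sub_add_cancel (hB j)
    rw [topFrac_monomial_eq (l := (μ - a).natAbs)
      (e := Finsupp.equivFunOnFinite.symm fun j => d j + (μ - a).natAbs - k)
      fun j => (hshift j).symm]
    refine Submodule.subset_span ⟨_, fun j => ?_, rfl⟩
    have := hk j
    simp only [Finsupp.equivFunOnFinite_symm_apply_apply]
    omega

theorem shiftedGrading_cohomology_fg [IsNoetherianRing R] {w : Fin n → ℤ} (hw : ∀ i, 0 < w i)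
    (a μ : ℤ) (i : ℕ) : ((shiftedGrading (R := R) w a).cohomology i μ).FG := by
  have fg_of_lcVanish (h : lcVanish S 𝐗 S i) :
      ((shiftedGrading (R := R) w a).cohomology i μ).FG :=
    (shiftedGrading w a).cohomology_eq_bot_of_lcVanish h μ ▸ Submodule.fg_bot
  rcases lt_trichotomy i n with hi | rfl | hi
  · exact fg_of_lcVanish (lcVanish_mvPolynomial_of_lt hi)
  · have hspan : (Submodule.span R (topClasses (R := R) w a μ (μ - a).natAbs)).FG :=
      Submodule.fg_span ((Set.finite_Iic _).image _)
    refine hspan.of_le ?_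
    rintro _ ⟨z, -, rfl⟩
    obtain ⟨k, m, rfl⟩ := exists_eq_topFrac z
    induction m using MvPolynomial.induction_on' with
    | monomial d b =>
      rw [← mul_one b, ← smul_eq_mul, ← smul_monomial, map_smul, map_smul]
      exact Submodule.smul_mem _ _ (cohomologyClass_topFrac_monomial_mem_span hw a μ k d)
    | add p q hp hq =>
      rw [map_add, map_add]
      exact Submodule.add_mem _ hp hq
  · exact fg_of_lcVanish (lcVanish_of_lt 𝐗 S hi)

end TopDegree

noncomputable section Finiteness

lemma fg_range_of_fg_map_ker {R Γ Q Q' : Type} [CommRing R] [AddCommGroup Γ] [Module R Γ]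
    [AddCommGroup Q] [Module R Q] [AddCommGroup Q'] [Module R Q'] {β : Γ →ₗ[R] Q'} {γ : Γ →ₗ[R] Q}
    (hβ : (LinearMap.range β).FG) (hγ : ((LinearMap.ker β).map γ).FG) :
    (LinearMap.range γ).FG := by
  refine Submodule.fg_of_fg_map_of_fg_inf_ker ((LinearMap.ker β).map γ).mkQ ?_ ?_
  · have hle : LinearMap.ker β ≤ LinearMap.ker (((LinearMap.ker β).map γ).mkQ ∘ₗ γ) := fun c hc =>
      (Submodule.Quotient.mk_eq_zero _).2 (Submodule.mem_map_of_mem hc)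
    have := Module.Finite.iff_fg.2 hβ
    have := Module.Finite.equiv β.quotKerEquivRange.symm
    rw [← LinearMap.range_comp, ← Submodule.range_liftQ _ _ hle]
    exact Module.Finite.iff_fg.1 (Module.Finite.range _)
  · rwa [Submodule.ker_mkQ, inf_eq_right.2 LinearMap.map_le_range]

variable {R : Type} [CommRing R]

namespace GradedProjections

section Cochains

variable {A : Type} [CommRing A] {n : ℕ} {x : Fin n → A} {w : Fin n → ℤ}
variable {N : Type} [AddCommGroup N] [Module R N] [Module A N]

/-- The product of finitely many gradings. -/
def pi {ι : Type} [Finite ι] (G : ι → GradedProjections R x w N) :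
    GradedProjections R x w (ι → N) where
  proj ν := LinearMap.pi fun l => (G l).proj ν ∘ₗ LinearMap.proj l
  proj_smul j ν m := funext fun l => (G l).proj_smul j ν (m l)
  proj_self ν m := funext fun l => (G l).proj_self ν (m l)
  proj_of_ne ν ν' m h := funext fun l => (G l).proj_of_ne ν ν' (m l) h
  exists_sum_proj m := by
    classical
    have := Fintype.ofFinite ι
    choose s hs using fun l => (G l).exists_sum_proj (m l)
    refine ⟨Finset.univ.biUnion s, fun t ht => ?_⟩
    ext l
    rw [Finset.sum_apply]
    exact hs l t ((Finset.subset_biUnion_of_mem s (Finset.mem_univ l)).trans ht)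

lemma pi_proj_apply {ι : Type} [Finite ι] (G : ι → GradedProjections R x w N) (ν : ℤ)
    (m : ι → N) (l : ι) : (pi G).proj ν m l = (G l).proj ν (m l) := rfl

lemma isGradedHom_single {ι : Type} [Finite ι] [DecidableEq ι] (G : ι → GradedProjections R x w N)
    (j : ι) : (G j).IsGradedHom (pi G) (LinearMap.single A (fun _ => N) j) := fun ν m => by
  ext l
  rw [pi_proj_apply]
  obtain rfl | hl := eq_or_ne l j <;> simp [*]

variable [Algebra R A] [IsScalarTower R A N]

lemma pi_cohomology_fg [IsNoetherianRing R] {ι : Type} [Finite ι]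
    {G : ι → GradedProjections R x w N} {i : ℕ} {μ : ℤ} (h : ∀ j, ((G j).cohomology i μ).FG) :
    ((pi G).cohomology i μ).FG := by
  classical
  have := Fintype.ofFinite ι
  let single (j : ι) : N →ₗ[A] ι → N := LinearMap.single A (fun _ => N) j
  refine (Submodule.fg_iSup (fun j => ((G j).cohomology i μ).map (cechQuotMap R x i (single j)))
    fun j => (h j).map _).of_le ?_
  rintro _ ⟨z, hz : cechD A x _ i z = 0, rfl⟩
  have hid : (LinearMap.id : (ι → N) →ₗ[A] ι → N) = ∑ j, single j ∘ₗ LinearMap.proj j := by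
    ext m l
    simp [single, Pi.single_apply]
  have hz' : z = ∑ j, cechCMap x i (single j) (cechCMap x i (LinearMap.proj j) z) := by
    simp only [cechCMap_cechCMap]
    rw [← LinearMap.sum_apply, ← map_sum, ← hid, cechCMap_id]
  rw [hz', map_sum]
  refine Submodule.sum_mem _ fun j _ => Submodule.mem_iSup_of_mem j ?_
  rw [← (isGradedHom_single G j).cechQuotMap_cohomologyClass]
  refine Submodule.mem_map_of_mem ((G j).cohomologyClass_mem_cohomology μ ?_)
  rw [cechD_cechCMap, hz, map_zero]

variable {N' : Type} [AddCommGroup N'] [Module A N'] {f : N →ₗ[A] N'}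

variable (R x f) in
/-- Pairs of a cochain `c` of `N` and a cochain `k` of `ker f` with `d c = k`. The map
`f c ↦ k` is the connecting homomorphism of `0 → ker f → N → N' → 0`. -/
def connectingPairs (i : ℕ) :
    Submodule R (cechC A x N i × cechC A x (LinearMap.ker f) (i + 1)) :=
  LinearMap.eqLocus
    ((cechD A x N i ∘ₗ LinearMap.fst A _ _).restrictScalars R)
    ((cechCMap x (i + 1) (LinearMap.ker f).subtype ∘ₗ LinearMap.snd A _ _).restrictScalars R)

lemma cechD_snd_of_mem_connectingPairs {i : ℕ}
    {p : cechC A x N i × cechC A x (LinearMap.ker f) (i + 1)} (hp : p ∈ connectingPairs R x f i) :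
    cechD A x _ (i + 1) p.2 = 0 := by
  have h : cechD A x N i p.1 = cechCMap x (i + 1) (LinearMap.ker f).subtype p.2 := hp
  apply cechCMap_injective x (LinearMap.ker f).injective_subtype (i + 2)
  rw [← cechD_cechCMap, ← h, cechD_cechD, map_zero]

lemma exists_mem_connectingPairs (hs : Function.Surjective f) {i : ℕ} {z : cechC A x N' i}
    (hz : cechD A x N' i z = 0) : ∃ p ∈ connectingPairs R x f i, cechCMap x i f p.1 = z := by
  obtain ⟨c, rfl⟩ := cechCMap_surjective x hs i z
  rw [cechD_cechCMap] at hz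
  obtain ⟨k, hk⟩ := (cechCMap_exact x (LinearMap.exact_subtype_ker_map f) (i + 1) _).1 hz
  exact ⟨(c, k), hk.symm, rfl⟩

variable [Module R N'] {G : GradedProjections R x w N} {G' : GradedProjections R x w N'}

/-- The grading induced on the kernel of a graded homomorphism. -/
def IsGradedHom.ker (hf : G.IsGradedHom G' f) : GradedProjections R x w (LinearMap.ker f) where
  proj ν :=
    { toFun := fun m => ⟨G.proj ν m, by rw [LinearMap.mem_ker, hf, m.2, map_zero]⟩
      map_add' := fun _ _ => Subtype.ext (map_add ..)
      map_smul' := fun _ _ => Subtype.ext (map_smul ..) }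
  proj_smul j ν m := Subtype.ext (G.proj_smul j ν m)
  proj_self ν m := Subtype.ext (G.proj_self ν m)
  proj_of_ne ν ν' m h := Subtype.ext (G.proj_of_ne ν ν' m h)
  exists_sum_proj m := by
    obtain ⟨s, hs⟩ := G.exists_sum_proj m
    exact ⟨s, fun t ht => Subtype.ext ((Submodule.coe_sum ..).trans (hs t ht))⟩

lemma IsGradedHom.isGradedHom_ker_subtype (hf : G.IsGradedHom G' f) :
    hf.ker.IsGradedHom G (LinearMap.ker f).subtype := fun _ _ => rfl

variable [IsScalarTower R A N']

lemma IsGradedHom.cohomologyClass_mem_map_of_connectingPairs (hf : G.IsGradedHom G' f) {i : ℕ}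
    {μ : ℤ} {p : cechC A x N i × cechC A x (LinearMap.ker f) (i + 1)}
    (hp : p ∈ connectingPairs R x f i) (h0 : hf.ker.cohomologyClass (i + 1) μ p.2 = 0) :
    G'.cohomologyClass i μ (cechCMap x i f p.1) ∈
      (G.cohomology i μ).map (cechQuotMap R x i f) := by
  have h : cechD A x N i p.1 = cechCMap x (i + 1) (LinearMap.ker f).subtype p.2 := hp
  obtain ⟨k, hk : cechD A x _ i k = _⟩ := (cohomologyClass_eq_zero_iff ..).1 h0
  refine ⟨G.cohomologyClass i μ (G.projC μ i p.1 - cechCMap x i (LinearMap.ker f).subtype k),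
    G.cohomologyClass_mem_cohomology μ ?_, ?_⟩
  · rw [map_sub, cechD_cechCMap, hk, cechD_projC, h,
      hf.isGradedHom_ker_subtype.cechCMap_projC, sub_self]
  · rw [hf.cechQuotMap_cohomologyClass, map_sub,
      (cechCMap_exact x (LinearMap.exact_subtype_ker_map f) i).apply_apply_eq_zero, sub_zero,
      hf.cechCMap_projC, cohomologyClass_projC]

lemma IsGradedHom.cohomology_fg_of_surjective [IsNoetherianRing R] (hf : G.IsGradedHom G' f)
    (hs : Function.Surjective f) {i : ℕ} {μ : ℤ} (hG : (G.cohomology i μ).FG)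
    (hker : (hf.ker.cohomology (i + 1) μ).FG) : (G'.cohomology i μ).FG := by
  let β := hf.ker.cohomologyClass (i + 1) μ ∘ₗ LinearMap.snd R _ _ ∘ₗ
    (connectingPairs R x f i).subtype
  let γ := G'.cohomologyClass i μ ∘ₗ (cechCMap x i f).restrictScalars R ∘ₗ LinearMap.fst R _ _ ∘ₗ
    (connectingPairs R x f i).subtype
  have hβ : (LinearMap.range β).FG := by
    refine hker.of_le ?_
    rintro _ ⟨p, rfl⟩
    exact hf.ker.cohomologyClass_mem_cohomology μ (cechD_snd_of_mem_connectingPairs p.2)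
  have hγ : ((LinearMap.ker β).map γ).FG := by
    refine (hG.map (cechQuotMap R x i f)).of_le ?_
    rintro _ ⟨p, hp, rfl⟩
    exact hf.cohomologyClass_mem_map_of_connectingPairs p.2 hp
  refine (fg_range_of_fg_map_ker hβ hγ).of_le ?_
  rintro _ ⟨z, hz, rfl⟩
  obtain ⟨p, hp, rfl⟩ := exists_mem_connectingPairs (R := R) hs hz
  exact ⟨⟨p, hp⟩, rfl⟩

end Cochains

section Polynomial

open MvPolynomial

variable {n : ℕ} {w : Fin n → ℤ}
variable {N : Type} [AddCommGroup N] [Module R N] [Module (MvPolynomial (Fin n) R) N]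

local notation "S" => MvPolynomial (Fin n) R

variable (G : GradedProjections R (fun i : Fin n => (X i : MvPolynomial (Fin n) R)) w N)

variable [IsScalarTower R (MvPolynomial (Fin n) R) N]

lemma shiftedGrading_proj_smul {a : ℤ} {g : N} (hg : G.proj a g = g) (ν : ℤ) (s : S) :
    (shiftedGrading w a).proj ν s • g = G.proj ν (s • g) := by
  induction s using MvPolynomial.induction_on generalizing ν with
  | C r =>
    rw [← algebraMap_eq, algebraMap_smul, map_smul, algebraMap_eq]
    obtain rfl | hν := eq_or_ne ν a
    · have hC : (shiftedGrading w ν).proj ν (C r) = C r := by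
        change weightedHomogeneousComponent w (ν - ν) _ = _
        rw [sub_self, (isWeightedHomogeneous_C w r).weightedHomogeneousComponent_same]
      rw [hC, hg, ← algebraMap_eq, algebraMap_smul]
    · rw [C_apply, shiftedGrading_proj_monomial_of_ne (by rw [map_zero]; omega), zero_smul, ← hg,
        G.proj_of_ne _ _ _ hν, smul_zero]
  | add p q hp hq => rw [map_add, add_smul, hp, hq, add_smul, map_add]
  | mul_X p j hp =>
    obtain ⟨ν, rfl⟩ : ∃ ν', ν = ν' + w j := ⟨ν - w j, by omega⟩
    have hX := (shiftedGrading w a).proj_smul j ν p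
    rw [mul_comm, ← smul_eq_mul, hX, smul_assoc, hp, smul_assoc, G.proj_smul]

theorem exists_surjective_isGradedHom_pi_shiftedGrading [Module.Finite S N] :
    ∃ (ι : Type) (_ : Finite ι) (a : ι → ℤ) (f : (ι → S) →ₗ[S] N),
      Function.Surjective f ∧ (pi fun j => shiftedGrading w (a j)).IsGradedHom G f := by
  have hspan : Submodule.span S {g : N | ∃ a, G.proj a g = g} = ⊤ := by
    refine eq_top_iff.2 fun m _ => ?_
    obtain ⟨s, hs⟩ := G.exists_sum_proj m
    rw [← hs s subset_rfl]
    exact Submodule.sum_mem _ fun ν _ => Submodule.subset_span ⟨ν, G.proj_self ν m⟩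
  obtain ⟨s, hs, hspan'⟩ := (Submodule.fg_span_iff_fg_span_finset_subset _).1
    (hspan ▸ Module.Finite.fg_top)
  choose a ha using fun j : s => hs j.2
  refine ⟨s, inferInstance, a, Fintype.linearCombination S fun j : s => (j : N), ?_, fun ν m => ?_⟩
  · rw [← LinearMap.range_eq_top, Fintype.range_linearCombination, Subtype.range_coe_subtype,
      ← hspan, hspan']
    rfl
  · simp only [Fintype.linearCombination_apply, map_sum, pi_proj_apply,
      G.shiftedGrading_proj_smul (ha _)]

theorem cohomology_fg [IsNoetherianRing R] [Module.Finite S N] (hw : ∀ i, 0 < w i) (i : ℕ) (μ : ℤ) :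
    (G.cohomology i μ).FG := by
  induction hk : n + 1 - i generalizing i N with
  | zero =>
    rw [G.cohomology_eq_bot_of_lcVanish (lcVanish_of_lt _ N (by omega)) μ]
    exact Submodule.fg_bot
  | succ k ih =>
    obtain ⟨ι, _, a, f, hs, hf⟩ := G.exists_surjective_isGradedHom_pi_shiftedGrading
    exact hf.cohomology_fg_of_surjective hs
      (pi_cohomology_fg fun j => shiftedGrading_cohomology_fg hw (a j) μ i)
      (ih hf.ker (i + 1) (by omega))

end Polynomial

end GradedProjections

end Finiteness

noncomputable section Comparison

open IsLocalRing MvPolynomial TensorProduct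

lemma lcVanish_of_subsingleton_lcMod {A : Type} [CommRing A] {n : ℕ} {x : Fin n → A} {N : Type}
    [AddCommGroup N] [Module A N] {i : ℕ} (h : Subsingleton (lcMod A x N i)) :
    lcVanish A x N i :=
  (lcVanish_iff x i).2 fun z hz =>
    (Submodule.Quotient.subsingleton_iff.1 h).ge (Submodule.mem_top (x := ⟨z, hz⟩))

namespace GradedProjections

variable {R : Type} [CommRing R] [IsNoetherianRing R] [IsLocalRing R]
  {F : ℕ → Type} [∀ q, AddCommGroup (F q)] [∀ q, Module R (F q)] [∀ q, Module.Free R (F q)]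
  [∀ q, Module.Finite R (F q)] {dF : ∀ q, F (q + 1) →ₗ[R] F q}
  {ε : F 0 →ₗ[R] R ⧸ maximalIdeal R} (hd : ∀ q, Function.Exact (dF (q + 1)) (dF q))
  (hdε : Function.Exact (dF 0) ε) (hε : Function.Surjective ε)
  {n : ℕ} {w : Fin n → ℤ} {M : Type} [AddCommGroup M] [Module R M]

include hd hdε hε

section Noetherian

variable {A : Type} [CommRing A] [Algebra R A] [IsNoetherianRing A] {x : Fin n → A} [Module A M]
  [IsScalarTower R A M] [Module.Finite A M] (G : GradedProjections R x w M)

theorem cohomology_tensor_residue_eq_bot {μ ℓ : ℤ}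
    (hT : ∀ i : ℕ, ℓ + 1 < i → lcVanish A x (torMod R A M F dF 1) i)
    (hM : ∀ i : ℕ, ℓ ≤ i → G.cohomology i μ = ⊥) (i : ℕ) (hi : ℓ ≤ i) :
    (G.tensor (R ⧸ maximalIdeal R)).cohomology i μ = ⊥ :=
  G.cohomology_tensor_eq_bot_of_resolution hd hdε hε
    (fun _ hj q => lcVanish_torMod_succ hd hdε hε (fun p hp => hT p (by omega)) q hj)
    fun j hj => hM j (by omega)

lemma exists_cohomology_ne_bot_of_tensor_residue {i : ℕ} {μ : ℤ}
    (hT : ∀ j : ℕ, i + 1 < j → lcVanish A x (torMod R A M F dF 1) j)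
    (h : (G.tensor (R ⧸ maximalIdeal R)).cohomology i μ ≠ ⊥) :
    ∃ j, i ≤ j ∧ G.cohomology j μ ≠ ⊥ := by
  by_contra! hM
  exact h (G.cohomology_tensor_residue_eq_bot hd hdε hε (ℓ := i) (fun j hj => hT j (by omega))
    (fun j hj => hM j (by omega)) i le_rfl)

end Noetherian

section Polynomial

variable [Module (MvPolynomial (Fin n) R) M] [IsScalarTower R (MvPolynomial (Fin n) R) M]
  [Module.Finite (MvPolynomial (Fin n) R) M]
  (G : GradedProjections R (fun i : Fin n => (X i : MvPolynomial (Fin n) R)) w M)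
  (hw : ∀ i, 0 < w i)
include hw

theorem cohomology_eq_bot_of_tensor_residue_of_le {μ ℓ : ℤ}
    (hT : ∀ i : ℕ, ℓ < i → lcVanish (MvPolynomial (Fin n) R) (fun j => X j)
      (torMod R (MvPolynomial (Fin n) R) M F dF 1) i)
    (hres : ∀ i : ℕ, ℓ ≤ i → (G.tensor (R ⧸ maximalIdeal R)).cohomology i μ = ⊥) (i : ℕ)
    (hi : ℓ ≤ i) : G.cohomology i μ = ⊥ := by
  induction hk : n + 1 - i using Nat.strong_induction_on generalizing i with
  | _ k ih =>
    obtain hn | hn := lt_or_ge n i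
    · exact G.cohomology_eq_bot_of_lcVanish (lcVanish_of_lt _ M hn) μ
    · exact G.cohomology_eq_bot_of_tensor_residue hd hdε hε
        (fun _ hj q => lcVanish_torMod_succ hd hdε hε (fun p hp => hT p (by omega)) q hj)
        (fun j hj => ih (n + 1 - j) (by omega) j (by omega) rfl) (G.cohomology_fg hw i μ)
        (hres i hi)

lemma exists_cohomology_tensor_residue_ne_bot {i : ℕ} {μ : ℤ}
    (hT : ∀ j : ℕ, i < j → lcVanish (MvPolynomial (Fin n) R) (fun j => X j)
      (torMod R (MvPolynomial (Fin n) R) M F dF 1) j) (h : G.cohomology i μ ≠ ⊥) :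
    ∃ j, i ≤ j ∧ (G.tensor (R ⧸ maximalIdeal R)).cohomology j μ ≠ ⊥ := by
  by_contra! hres
  exact h (G.cohomology_eq_bot_of_tensor_residue_of_le hd hdε hε hw (ℓ := i)
    (fun j hj => hT j (by omega)) (fun j hj => hres j (by omega)) i le_rfl)

end Polynomial

end GradedProjections

end Comparison

open MvPolynomial in
/-- **Proposition (CohFib (ii)).**  Let `(R, 𝔪, k)` be a Noetherian local ring,
`S := R[X_1, …, X_n]` graded with `deg X_i = w i > 0`, `M` a finitely generated graded
`S`-module and `M̄ := M ⊗_R k`.  Write `cd ≤ c` for the vanishing `H^i_{S₊}(Tor_1^R(M,k)) = 0`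
for all `i > c`.  Then for all integers `μ` and `ℓ` :
* if `cd_{S₊}(Tor_1^R(M,k)) ≤ ℓ + 1`, then `H^i_{S₊}(M)_μ = 0` for all `i ≥ ℓ` implies
  `H^i_{S₊}(M̄)_μ = 0` for all `i ≥ ℓ`;
* the two conditions are equivalent if `cd_{S₊}(Tor_1^R(M,k)) ≤ ℓ`;
* in particular `reg M̄ ≤ reg M` if `cd_{S₊}(Tor_1^R(M,k)) ≤ 1`, with equality if
  moreover `depth_{S₊} M > 0` (i.e. `H^0_{S₊}(M) = 0`).
(`Tor` is computed from any resolution of `k` by finite free `R`-modules, local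
cohomology by the graded Čech complex on the variables.) -/
theorem localCohomology_fiber_comparison
    (R : Type) [CommRing R] [IsNoetherianRing R] [IsLocalRing R]
    {n : ℕ} (w : Fin n → ℤ) (hw : ∀ i, 0 < w i)
    (M : Type) [AddCommGroup M]
    [Module (MvPolynomial (Fin n) R) M] [Module R M]
    [IsScalarTower R (MvPolynomial (Fin n) R) M]
    [Module.Finite (MvPolynomial (Fin n) R) M]
    (ℳ : ℤ → AddSubgroup M) [DirectSum.Decomposition ℳ]
    [SetLike.GradedSMul (weightedHomogeneousSubmodule R w) ℳ]
    (F : ℕ → Type) [∀ q, AddCommGroup (F q)] [∀ q, Module R (F q)]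
    [∀ q, Module.Free R (F q)] [∀ q, Module.Finite R (F q)]
    (dF : ∀ q : ℕ, F (q + 1) →ₗ[R] F q)
    (ε : F 0 →ₗ[R] (R ⧸ IsLocalRing.maximalIdeal R))
    (hexact : ∀ q : ℕ, Function.Exact (dF (q + 1)) (dF q))
    (hexact0 : Function.Exact (dF 0) ε) (hsurj : Function.Surjective ε) :
    (∀ μ ℓ : ℤ,
      ((∀ i : ℕ, ℓ + 1 < (i : ℤ) →
          lcVanish (MvPolynomial (Fin n) R) (fun j : Fin n => (X j : MvPolynomial (Fin n) R))
            (torMod R (MvPolynomial (Fin n) R) M F dF 1) i) →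
        ((∀ i : ℕ, ℓ ≤ (i : ℤ) →
          ¬ lcGradeNonzero (MvPolynomial (Fin n) R)
            (fun j : Fin n => (X j : MvPolynomial (Fin n) R)) M ℳ w i μ) →
        (∀ i : ℕ, ℓ ≤ (i : ℤ) →
          ¬ lcGradeNonzero (MvPolynomial (Fin n) R)
            (fun j : Fin n => (X j : MvPolynomial (Fin n) R))
            (TensorProduct R M (R ⧸ IsLocalRing.maximalIdeal R))
            (fun ν => AddSubgroup.closure
              {z : TensorProduct R M (R ⧸ IsLocalRing.maximalIdeal R) |
                ∃ m ∈ ℳ ν, ∃ c, z = m ⊗ₜ[R] c}) w i μ))) ∧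
      ((∀ i : ℕ, ℓ < (i : ℤ) →
          lcVanish (MvPolynomial (Fin n) R) (fun j : Fin n => (X j : MvPolynomial (Fin n) R))
            (torMod R (MvPolynomial (Fin n) R) M F dF 1) i) →
        ((∀ i : ℕ, ℓ ≤ (i : ℤ) →
          ¬ lcGradeNonzero (MvPolynomial (Fin n) R)
            (fun j : Fin n => (X j : MvPolynomial (Fin n) R)) M ℳ w i μ) ↔
        (∀ i : ℕ, ℓ ≤ (i : ℤ) →
          ¬ lcGradeNonzero (MvPolynomial (Fin n) R)
            (fun j : Fin n => (X j : MvPolynomial (Fin n) R))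
            (TensorProduct R M (R ⧸ IsLocalRing.maximalIdeal R))
            (fun ν => AddSubgroup.closure
              {z : TensorProduct R M (R ⧸ IsLocalRing.maximalIdeal R) |
                ∃ m ∈ ℳ ν, ∃ c, z = m ⊗ₜ[R] c}) w i μ)))) ∧
    ((∀ i : ℕ, 1 < (i : ℤ) →
        lcVanish (MvPolynomial (Fin n) R) (fun j : Fin n => (X j : MvPolynomial (Fin n) R))
          (torMod R (MvPolynomial (Fin n) R) M F dF 1) i) →
      (∀ ρ : ℤ,
        (∃ (i : ℕ) (μ : ℤ),
          lcGradeNonzero (MvPolynomial (Fin n) R)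
            (fun j : Fin n => (X j : MvPolynomial (Fin n) R))
            (TensorProduct R M (R ⧸ IsLocalRing.maximalIdeal R))
            (fun ν => AddSubgroup.closure
              {z : TensorProduct R M (R ⧸ IsLocalRing.maximalIdeal R) |
                ∃ m ∈ ℳ ν, ∃ c, z = m ⊗ₜ[R] c}) w i μ ∧ μ + i = ρ) →
        ∃ (i : ℕ) (μ : ℤ),
          lcGradeNonzero (MvPolynomial (Fin n) R)
            (fun j : Fin n => (X j : MvPolynomial (Fin n) R)) M ℳ w i μ ∧ ρ ≤ μ + i) ∧
      (Subsingleton (lcMod (MvPolynomial (Fin n) R)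
          (fun j : Fin n => (X j : MvPolynomial (Fin n) R)) M 0) →
        ∀ ρ : ℤ,
        (∃ (i : ℕ) (μ : ℤ),
          lcGradeNonzero (MvPolynomial (Fin n) R)
            (fun j : Fin n => (X j : MvPolynomial (Fin n) R)) M ℳ w i μ ∧ μ + i = ρ) →
        ∃ (i : ℕ) (μ : ℤ),
          lcGradeNonzero (MvPolynomial (Fin n) R)
            (fun j : Fin n => (X j : MvPolynomial (Fin n) R))
            (TensorProduct R M (R ⧸ IsLocalRing.maximalIdeal R))
            (fun ν => AddSubgroup.closure
              {z : TensorProduct R M (R ⧸ IsLocalRing.maximalIdeal R) |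
                ∃ m ∈ ℳ ν, ∃ c, z = m ⊗ₜ[R] c}) w i μ ∧ ρ ≤ μ + i)) := by
  let G := GradedProjections.ofDecomposition R w ℳ
  have hℳ := GradedProjections.mem_iff_ofDecomposition_proj_eq (R := R) (w := w) ℳ
  have hM (i μ) := G.lcGradeNonzero_iff hℳ (i := i) (μ := μ)
  have hres (i μ) := (G.tensor (R ⧸ IsLocalRing.maximalIdeal R)).lcGradeNonzero_iff
    (G.mem_tensor_iff _ hℳ) (i := i) (μ := μ)
  simp only [hM, hres, not_not]
  refine ⟨fun μ ℓ => ⟨G.cohomology_tensor_residue_eq_bot hexact hexact0 hsurj, fun hT => ⟨?_, ?_⟩⟩,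
    fun hT => ⟨?_, ?_⟩⟩
  · exact G.cohomology_tensor_residue_eq_bot hexact hexact0 hsurj fun i hi => hT i (by omega)
  · exact G.cohomology_eq_bot_of_tensor_residue_of_le hexact hexact0 hsurj hw hT
  · rintro ρ ⟨i, μ, hi, rfl⟩
    obtain ⟨j, hij, hj⟩ := G.exists_cohomology_ne_bot_of_tensor_residue hexact hexact0 hsurj
      (fun j hj => hT j (by omega)) hi
    exact ⟨j, μ, hj, by omega⟩
  · rintro hdepth ρ ⟨i, μ, hi, rfl⟩
    have hi0 : i ≠ 0 := by
      rintro rfl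
      exact hi (G.cohomology_eq_bot_of_lcVanish (lcVanish_of_subsingleton_lcMod hdepth) μ)
    obtain ⟨j, hij, hj⟩ := G.exists_cohomology_tensor_residue_ne_bot hexact hexact0 hsurj hw
      (fun j hj => hT j (by omega)) hi
    exact ⟨j, μ, hj, by omega⟩
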